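/- arXiv:math/0608622 — 2 statements merged into one kernel-verified Lean document; each statement's English description precedes it below -/
import Mathlib

section
/- Let k be a positive integer. If f ∈ E_c(k) and t ∈ (0, ∞), then tf ∈ E_c(k). (Consequently every distribution in D_c(k) is infinitely divisible with respect to the Boolean convolution.) -/
open Finset

attribute [local instance] Classical.propDecidable

open scoped ComplexOrder

namespace BBP

/-- Partitions of `{1,…,m}` modeled as `Finpartition`s of `univ : Finset (Fin m)`. -/
abbrev FP (m : ℕ) := Finpartition (Finset.univ : Finset (Fin m))

noncomputable instance (m : ℕ) : Fintype (FP m) :=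
  Fintype.ofInjective (fun π : FP m => π.parts) fun a b h => by
    cases a; cases b; simpa using h

/-- `x` is the minimum of the set `C`. -/
def IsMinOf {m : ℕ} (x : Fin m) (C : Finset (Fin m)) : Prop :=
  x ∈ C ∧ ∀ y ∈ C, x ≤ y

/-- `x` is the maximum of the set `C`. -/
def IsMaxOf {m : ℕ} (x : Fin m) (C : Finset (Fin m)) : Prop :=
  x ∈ C ∧ ∀ y ∈ C, y ≤ x

/-- `a` and `b` lie in one block of `π`. -/
def SameBlock {m : ℕ} (π : FP m) (a b : Fin m) : Prop :=
  ∃ B ∈ π.parts, a ∈ B ∧ b ∈ B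

/-- `π` is non-crossing: if `i<j<k<l`, `i,k` in one block and `j,l` in one block,
then all of them are in one block. -/
def IsNC {m : ℕ} (π : FP m) : Prop :=
  ∀ i j k l : Fin m, i < j → j < k → k < l →
    SameBlock π i k → SameBlock π j l → SameBlock π i j

/-- `A` embraces `B` : `min A ≤ min B` and `max B ≤ max A`. -/
def Embraces {m : ℕ} (A B : Finset (Fin m)) : Prop :=
  ∃ a₁ a₂ b₁ b₂ : Fin m, IsMinOf a₁ A ∧ IsMaxOf a₂ A ∧ IsMinOf b₁ B ∧ IsMaxOf b₂ B ∧
    a₁ ≤ b₁ ∧ b₂ ≤ a₂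

/-- `B` strictly embraces `A` : `min B < min A` and `max A < max B`. -/
def StrictlyEmbraces {m : ℕ} (B A : Finset (Fin m)) : Prop :=
  ∃ b₁ b₂ a₁ a₂ : Fin m, IsMinOf b₁ B ∧ IsMaxOf b₂ B ∧ IsMinOf a₁ A ∧ IsMaxOf a₂ A ∧
    b₁ < a₁ ∧ a₂ < b₂

/-- `A` is an outer block of `π`. -/
def IsOuter {m : ℕ} (π : FP m) (A : Finset (Fin m)) : Prop :=
  A ∈ π.parts ∧ ¬ ∃ B ∈ π.parts, StrictlyEmbraces B A

/-- The number `|π|_out` of outer blocks of `π`. -/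
noncomputable def numOuter {m : ℕ} (π : FP m) : ℕ :=
  (π.parts.filter fun A => IsOuter π A).card

/-- Reversed refinement order: every block of `ρ` is a union of blocks of `π`. -/
def Refines {m : ℕ} (π ρ : FP m) : Prop :=
  ∀ B ∈ π.parts, ∃ C ∈ ρ.parts, B ⊆ C

/-- The partial order `π ≪ ρ`. -/
def Ll {m : ℕ} (π ρ : FP m) : Prop :=
  Refines π ρ ∧
    ∀ C ∈ ρ.parts, ∃ B ∈ π.parts, ∃ x y : Fin m,
      IsMinOf x C ∧ IsMaxOf y C ∧ x ∈ B ∧ y ∈ B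

/-- The partition `1ₙ` of `{1,…,n+1}` with a single block. -/
noncomputable def fullPart (n : ℕ) : FP (n+1) :=
  Finpartition.indiscrete (by simpa using (Finset.univ_nonempty (α := Fin (n+1))).ne_empty)

/-- `π` is an interval partition. -/
def IsIntervalPartition {m : ℕ} (π : FP m) : Prop :=
  ∀ B ∈ π.parts, ∀ x ∈ B, ∀ z ∈ B, ∀ y : Fin m, x ≤ y → y ≤ z → y ∈ B

/-- `σ` is the permutation associated to `π` : on each block `{b₁ < ⋯ < b_q}` it is the
cycle `b₁ ↦ b₂ ↦ ⋯ ↦ b_q ↦ b₁`. -/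
def IsAssocPerm {m : ℕ} (π : FP m) (σ : Equiv.Perm (Fin m)) : Prop :=
  ∀ B ∈ π.parts, ∀ b ∈ B, σ b ∈ B ∧
    ((b < σ b ∧ ∀ x ∈ B, b < x → σ b ≤ x) ∨ (IsMaxOf b B ∧ IsMinOf (σ b) B))

/-- `κ` is the Kreweras complement of `π`, characterized by `P_κ = P_π⁻¹ ∘ P_{1ₙ}`,
where `P_{1ₙ}` is the cycle `1 ↦ 2 ↦ ⋯ ↦ n ↦ 1` (i.e. `finRotate`). -/
def IsKrewerasPair {m : ℕ} (π κ : FP m) : Prop :=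
  ∃ σπ σκ : Equiv.Perm (Fin m), IsAssocPerm π σπ ∧ IsAssocPerm κ σκ ∧
    σκ = σπ⁻¹ * finRotate m

/-- the element `2a-1` of `{1,…,2n}`, in `Fin (2n)` (0-indexed). -/
def oddEmb {n : ℕ} (a : Fin n) : Fin (2*n) := ⟨2*a.val, by have := a.isLt; omega⟩

/-- the element `2a` of `{1,…,2n}`, in `Fin (2n)` (0-indexed). -/
def evenEmb {n : ℕ} (a : Fin n) : Fin (2*n) := ⟨2*a.val + 1, by have := a.isLt; omega⟩

/-- `θ = π^(odd) ∪ ρ^(even)` : the blocks of `θ` are the sets `{2a-1 : a ∈ A}` for `A`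
a block of `π` and the sets `{2b : b ∈ B}` for `B` a block of `ρ`. -/
def IsOddEvenJoin {n : ℕ} (π ρ : FP n) (θ : FP (2*n)) : Prop :=
  θ.parts = π.parts.image (fun B => B.image oddEmb) ∪
    ρ.parts.image (fun B => B.image evenEmb)

/-- a block consisting of odd elements of `{1,…,2n}` (even 0-indexed values). -/
def OddBlock {m : ℕ} (B : Finset (Fin m)) : Prop := ∀ x ∈ B, x.val % 2 = 0

/-- a block consisting of even elements of `{1,…,2n}` (odd 0-indexed values). -/
def EvenBlock {m : ℕ} (B : Finset (Fin m)) : Prop := ∀ x ∈ B, x.val % 2 = 1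

/-- every block of `θ` is contained in the odds or in the evens. -/
def ParityPreserving {m : ℕ} (θ : FP m) : Prop :=
  ∀ B ∈ θ.parts, OddBlock B ∨ EvenBlock B

def OppositeParity {m : ℕ} (A B : Finset (Fin m)) : Prop :=
  (OddBlock A ∧ EvenBlock B) ∨ (EvenBlock A ∧ OddBlock B)

def SameParity {m : ℕ} (A B : Finset (Fin m)) : Prop :=
  (OddBlock A ∧ OddBlock B) ∨ (EvenBlock A ∧ EvenBlock B)

/-- `P = Parent_θ(A)` : the unique block `P ≠ A` of `θ` embracing `A` such that every
block `A' ≠ A` of `θ` embracing `A` also embraces `P`. -/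
def IsParent {m : ℕ} (θ : FP m) (A P : Finset (Fin m)) : Prop :=
  P ∈ θ.parts ∧ P ≠ A ∧ Embraces P A ∧
    ∀ A' ∈ θ.parts, A' ≠ A → Embraces A' A → Embraces A' P

/-- `θ` has exactly two outer blocks. -/
def ExactlyTwoOuterBlocks {m : ℕ} (θ : FP m) : Prop :=
  ∃ M ∈ θ.parts, ∃ N ∈ θ.parts, M ≠ N ∧ IsOuter θ M ∧ IsOuter θ N ∧
    ∀ A ∈ θ.parts, IsOuter θ A → A = M ∨ A = N

/-- A series in `ℂ₀⟨⟨z₁,…,z_k⟩⟩`, given by its family of coefficients: `f n w` is the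
coefficient of `z_{w 0} z_{w 1} ⋯ z_{w n}` (a word of length `n+1 ≥ 1`). -/
abbrev NCSeries (k : ℕ) := (n : ℕ) → (Fin (n+1) → Fin k) → ℂ

/-- The coefficient `Cf_{w|B}(f)` of the restriction of the word `w` to the set `B`,
listing the elements of `B` in increasing order.  (Equals `1` for `B = ∅`.) -/
noncomputable def partCoeff {k m : ℕ} (f : NCSeries k) (w : Fin (m+1) → Fin k)
    (B : Finset (Fin (m+1))) : ℂ :=
  if h : B.Nonempty then
    f (B.card - 1) (fun j =>
      w ((B.orderIsoOfFin (Nat.succ_pred_eq_of_pos (Finset.card_pos.mpr h)).symm j).1))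
  else 1

/-- The generalized coefficient `Cf_{w;π}(f) = ∏_{B block of π} Cf_{w|B}(f)`. -/
noncomputable def genCoeff {k m : ℕ} (f : NCSeries k) (w : Fin (m+1) → Fin k)
    (π : FP (m+1)) : ℂ :=
  ∏ B ∈ π.parts, partCoeff f w B

/-- Linear functionals on `ℂ⟨X₁,…,X_k⟩`. -/
abbrev Dist (k : ℕ) := FreeAlgebra ℂ (Fin k) →ₗ[ℂ] ℂ

/-- `μ ∈ D_alg(k)` : `μ` is normalized by `μ(1) = 1`. -/
def IsDalg {k : ℕ} (μ : Dist k) : Prop := μ 1 = 1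

/-- The moment series `M_μ`, with `(momentSeries μ) n w = μ (X_{w 0} ⋯ X_{w n})`. -/
noncomputable def momentSeries {k : ℕ} (μ : Dist k) : NCSeries k :=
  fun _ w => μ ((List.ofFn fun j => FreeAlgebra.ι ℂ (w j)).prod)

/-- `f = R_μ` : the moments of `μ` are obtained from `f` by summation over all
non-crossing partitions. -/
def IsRTransform {k : ℕ} (μ : Dist k) (f : NCSeries k) : Prop :=
  ∀ (n : ℕ) (w : Fin (n+1) → Fin k),
    momentSeries μ n w = ∑ π : FP (n+1), if IsNC π then genCoeff f w π else 0

/-- `g = η_μ` : the moments of `μ` are obtained from `g` by summation over all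
interval partitions. -/
def IsEtaSeries {k : ℕ} (μ : Dist k) (g : NCSeries k) : Prop :=
  ∀ (n : ℕ) (w : Fin (n+1) → Fin k),
    momentSeries μ n w = ∑ π : FP (n+1), if IsIntervalPartition π then genCoeff g w π else 0

/-- `μ ∈ D_c(k)` : `μ` is the joint distribution of a `k`-tuple of selfadjoint elements
with respect to a state on a unital C*-algebra. -/
def IsDc {k : ℕ} (μ : Dist k) : Prop :=
  IsDalg μ ∧
  ∃ (A : Type) (_ : NormedRing A) (_ : StarRing A) (_ : CStarRing A)
    (_ : NormedAlgebra ℂ A) (_ : StarModule ℂ A) (_ : CompleteSpace A)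
    (φ : A →ₗ[ℂ] ℂ) (x : Fin k → A),
      φ 1 = 1 ∧ (∀ a : A, 0 ≤ φ (star a * a)) ∧ (∀ i, IsSelfAdjoint (x i)) ∧
      ∀ (n : ℕ) (w : Fin (n+1) → Fin k),
        momentSeries μ n w = φ ((List.ofFn fun j => x (w j)).prod)

/-- convergence in moments. -/
def ConvInMoments {k : ℕ} (μseq : ℕ → Dist k) (μ : Dist k) : Prop :=
  ∀ P : FreeAlgebra ℂ (Fin k),
    Filter.Tendsto (fun N => μseq N P) Filter.atTop (nhds (μ P))

/-- coefficientwise convergence of series. -/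
def ConvCoeffwise {k : ℕ} (fseq : ℕ → NCSeries k) (f : NCSeries k) : Prop :=
  ∀ (n : ℕ) (w : Fin (n+1) → Fin k),
    Filter.Tendsto (fun N => fseq N n w) Filter.atTop (nhds (f n w))

/-- `ν` is the `p`-fold free additive convolution `μ ⊞ ⋯ ⊞ μ`, i.e. `R_ν = p · R_μ`. -/
def IsNFoldFree {k : ℕ} (p : ℕ) (μ ν : Dist k) : Prop :=
  ∃ f : NCSeries k, IsRTransform μ f ∧ IsRTransform ν (fun n w => (p : ℂ) * f n w)

/-- `ν` is the `p`-fold Boolean convolution `μ ⊎ ⋯ ⊎ μ`, i.e. `η_ν = p · η_μ`. -/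
def IsNFoldBool {k : ℕ} (p : ℕ) (μ ν : Dist k) : Prop :=
  ∃ g : NCSeries k, IsEtaSeries μ g ∧ IsEtaSeries ν (fun n w => (p : ℂ) * g n w)

/-- `ν = 𝔹(μ)` : the Boolean Bercovici–Pata bijection, `R_{𝔹(μ)} = η_μ`. -/
def IsBP {k : ℕ} (μ ν : Dist k) : Prop :=
  ∃ f : NCSeries k, IsEtaSeries μ f ∧ IsRTransform ν f

/-- `μ ∈ D_c(k)` is infinitely divisible with respect to `⊞`. -/
def IsInfDiv {k : ℕ} (μ : Dist k) : Prop :=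
  IsDc μ ∧ ∀ N : ℕ, 0 < N → ∃ ν : Dist k, IsDc ν ∧ IsNFoldFree N ν μ

/-- `g = Reta(f)`, i.e. there is `μ ∈ D_alg(k)` with `f = R_μ` and `g = η_μ`. -/
def RetaRel {k : ℕ} (f g : NCSeries k) : Prop :=
  ∃ μ : Dist k, IsDalg μ ∧ IsRTransform μ f ∧ IsEtaSeries μ g



/-! ### Operator part -/

section operators

variable {H : Type} [NormedAddCommGroup H] [InnerProductSpace ℂ H] [CompleteSpace H]

/-- Sum over interval partitions, written recursively on words: the first block is split off. -/
noncomputable def wordSum {α : Type} (g : List α → ℂ) : List α → ℂ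
  | [] => 1
  | x :: L => ∑ j ∈ range (L.length + 1), g (x :: L.take j) * wordSum g (L.drop j)
termination_by L => L.length
decreasing_by
  simp only [List.length_drop, List.length_cons]
  omega

theorem wordSum_nil {α : Type} (g : List α → ℂ) : wordSum g [] = 1 := by
  rw [wordSum]

theorem wordSum_cons {α : Type} (g : List α → ℂ) (x : α) (L : List α) :
    wordSum g (x :: L) = ∑ j ∈ range (L.length + 1), g (x :: L.take j) * wordSum g (L.drop j) := by
  rw [wordSum]

theorem wordSum_congr {α : Type} (g g' : List α → ℂ) (h : ∀ x L, g (x :: L) = g' (x :: L))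
    (n : ℕ) : ∀ L : List α, L.length ≤ n → wordSum g L = wordSum g' L := by
  induction n with
  | zero =>
    intro L hL
    have : L = [] := List.length_eq_zero_iff.mp (by omega)
    subst this
    simp [wordSum_nil]
  | succ n ih =>
    intro L hL
    cases L with
    | nil => simp [wordSum_nil]
    | cons x L =>
      rw [wordSum_cons, wordSum_cons]
      refine Finset.sum_congr rfl fun j _ => ?_
      rw [h, ih]
      simp at hL ⊢
      omega

theorem wordSum_inj {α : Type} (g g' : List α → ℂ) (h : ∀ L, wordSum g L = wordSum g' L)
    (n : ℕ) : ∀ x L, L.length ≤ n → g (x :: L) = g' (x :: L) := by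
  induction n with
  | zero =>
    intro x L hL
    have : L = [] := List.length_eq_zero_iff.mp (by omega)
    subst this
    simpa [wordSum_cons, wordSum_nil] using h [x]
  | succ n ih =>
    intro x L hL
    have h1 := h (x :: L)
    rw [wordSum_cons, wordSum_cons, Finset.sum_range_succ, Finset.sum_range_succ] at h1
    have h2 : ∑ j ∈ range L.length, g (x :: L.take j) * wordSum g (L.drop j)
        = ∑ j ∈ range L.length, g' (x :: L.take j) * wordSum g' (L.drop j) := by
      refine Finset.sum_congr rfl fun j hj => ?_
      rw [h, ih]
      simp at hj ⊢
      omega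
    rw [h2] at h1
    simpa [wordSum_nil] using h1

/-- the vectors `V(L)`, with `V([]) = Ω`, `V(l :: L) = (Q + s P) x_l V(L)`. -/
noncomputable def vecV {k : ℕ} (Ω : H) (x : Fin k → H →L[ℂ] H) (s : ℂ) : List (Fin k) → H
  | [] => Ω
  | l :: L => x l (vecV Ω x s L) + ((s - 1) * inner ℂ Ω (x l (vecV Ω x s L))) • Ω

theorem vecV_expand {k : ℕ} (Ω : H) (hΩ : inner ℂ Ω Ω = (1 : ℂ)) (x : Fin k → H →L[ℂ] H) (s : ℂ)
    (L : List (Fin k)) :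
    vecV Ω x s L = ∑ j ∈ range (L.length + 1),
      (inner ℂ Ω (vecV Ω x s (L.drop j)) : ℂ) • vecV Ω x 0 (L.take j) := by
  induction L with
  | nil => simp [-inner_self_eq_norm_sq_to_K, vecV, hΩ]
  | cons l L ih =>
    rw [List.length_cons, Finset.sum_range_succ']
    have h1 : x l (vecV Ω x s L) = ∑ j ∈ range (L.length + 1),
      (inner ℂ Ω (vecV Ω x s (L.drop j)) : ℂ) • x l (vecV Ω x 0 (L.take j)) := by
      conv_lhs => rw [ih]
      simp [map_sum]
    have h2 : ∑ j ∈ range (L.length + 1), (inner ℂ Ω (vecV Ω x s ((l :: L).drop (j+1))) : ℂ) •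
        vecV Ω x 0 ((l :: L).take (j+1)) = x l (vecV Ω x s L)
          - (inner ℂ Ω (x l (vecV Ω x s L)) : ℂ) • Ω := by
      rw [h1, inner_sum, Finset.sum_smul, ← Finset.sum_sub_distrib]
      refine Finset.sum_congr rfl fun j _ => ?_
      simp only [List.drop_succ_cons, List.take_succ_cons, vecV, inner_smul_right, smul_add, smul_smul]
      module
    rw [h2]
    simp only [List.drop_zero, List.take_zero, vecV, inner_add_right, inner_smul_right, hΩ]
    module

/-- candidate eta coefficients. -/
noncomputable def etaVec {k : ℕ} (Ω : H) (x : Fin k → H →L[ℂ] H) : List (Fin k) → ℂ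
  | [] => 0
  | l :: L => inner ℂ Ω (x l (vecV Ω x 0 L))

theorem vecV_wordSum {k : ℕ} (Ω : H) (hΩ : inner ℂ Ω Ω = (1 : ℂ)) (x : Fin k → H →L[ℂ] H) (s : ℂ)
    (n : ℕ) : ∀ L : List (Fin k), L.length ≤ n →
    inner ℂ Ω (vecV Ω x s L) = wordSum (fun L => s * etaVec Ω x L) L := by
  induction n with
  | zero =>
    intro L hL
    have : L = [] := List.length_eq_zero_iff.mp (by omega)
    subst this
    simp [-inner_self_eq_norm_sq_to_K, wordSum_nil, vecV, hΩ]
  | succ n ih =>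
    intro L hL
    cases L with
    | nil => simp [-inner_self_eq_norm_sq_to_K, wordSum_nil, vecV, hΩ]
    | cons l L =>
      rw [wordSum_cons]
      have h1 : inner ℂ Ω (vecV Ω x s (l :: L)) = s * inner ℂ Ω (x l (vecV Ω x s L)) := by
        simp only [vecV, inner_add_right, inner_smul_right, hΩ]
        ring
      rw [h1, vecV_expand Ω hΩ x s L]
      simp only [map_sum, inner_sum, map_smul, inner_smul_right, Finset.mul_sum]
      refine Finset.sum_congr rfl fun j _ => ?_
      rw [ih _ (by simp at hL ⊢; omega)]
      have h2 : etaVec Ω x (l :: L.take j) = inner ℂ Ω (x l (vecV Ω x 0 (L.take j))) := rfl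
      rw [h2]
      ring

theorem vecV_one {k : ℕ} (Ω : H) (x : Fin k → H →L[ℂ] H) (L : List (Fin k)) :
    vecV Ω x 1 L = (L.map x).prod Ω := by
  induction L with
  | nil => simp [vecV]
  | cons l L ih => simp [vecV, ih]

/-- `D = 1 + (√t - 1) P`. -/
noncomputable def opD (Ω : H) (r : ℝ) : H →L[ℂ] H :=
  ContinuousLinearMap.id ℂ H + ((r : ℂ) - 1) • (innerSL ℂ Ω).smulRight Ω

theorem opD_apply (Ω : H) (r : ℝ) (v : H) :
    opD Ω r v = v + (((r : ℂ) - 1) * inner ℂ Ω v) • Ω := by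
  simp [opD, smul_smul]

theorem opD_sa (Ω : H) (r : ℝ) : IsSelfAdjoint (opD Ω r) := by
  rw [ContinuousLinearMap.isSelfAdjoint_iff_isSymmetric]
  intro v w
  simp only [ContinuousLinearMap.coe_coe, opD_apply, inner_add_left, inner_add_right,
    inner_smul_left, inner_smul_right, map_mul, map_sub, Complex.conj_ofReal, map_one,
    inner_conj_symm]
  ring

theorem opD_moment {k : ℕ} (Ω : H) (hΩ : inner ℂ Ω Ω = (1 : ℂ)) (x : Fin k → H →L[ℂ] H) (t : ℝ)
    (ht : 0 < t) (L : List (Fin k)) :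
    inner ℂ Ω ((L.map fun i => opD Ω (√t) * x i * opD Ω (√t)).prod Ω)
      = inner ℂ Ω (vecV Ω x t L) := by
  have hs : ((√t : ℝ) : ℂ) * ((√t : ℝ) : ℂ) = (t : ℂ) := by
    rw [← Complex.ofReal_mul, Real.mul_self_sqrt ht.le]
  have hs0 : ((√t : ℝ) : ℂ) ≠ 0 := by
    simpa using (Real.sqrt_pos.mpr ht).ne'
  have key : opD Ω (√t) ((L.map fun i => opD Ω (√t) * x i * opD Ω (√t)).prod Ω)
      = ((√t : ℝ) : ℂ) • vecV Ω x t L := by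
    induction L with
    | nil =>
      simp only [List.map_nil, List.prod_nil, vecV, opD_apply, one_apply_eq_self, hΩ]
      module
    | cons l L ih =>
      simp only [List.map_cons, List.prod_cons, mul_apply_eq_comp, ih, vecV]
      simp only [opD_apply, map_smul, inner_add_right, inner_smul_right, hΩ, ← hs, smul_add,
        smul_smul]
      rw [add_assoc, ← add_smul]
      congr 2
      ring
  have h2 : ∀ v : H, inner ℂ Ω (opD Ω (√t) v) = ((√t : ℝ) : ℂ) * inner ℂ Ω v := by
    intro v
    simp only [opD_apply, inner_add_right, inner_smul_right, hΩ]
    ring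
  have h3 := congrArg (fun v => inner ℂ Ω v) key
  simp only [h2, inner_smul_right] at h3
  exact mul_left_cancel₀ hs0 h3

end operators

theorem gns_exists {A : Type} [CStarAlgebra A] (φ : A →ₗ[ℂ] ℂ) (h1 : φ 1 = 1)
    (hpos : ∀ a : A, 0 ≤ φ (star a * a)) :
    ∃ (H : Type) (_ : NormedAddCommGroup H) (_ : InnerProductSpace ℂ H) (_ : CompleteSpace H)
      (π : A →⋆ₐ[ℂ] (H →L[ℂ] H)) (Ω : H), inner ℂ Ω Ω = (1 : ℂ) ∧
      ∀ a, φ a = inner ℂ Ω (π a Ω) := by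
  let _ := CStarAlgebra.spectralOrder A
  have := CStarAlgebra.spectralOrderedRing A
  let F : A →ₚ[ℂ] ℂ := PositiveLinearMap.mk₀ φ (by
    intro a ha
    obtain ⟨b, rfl⟩ := CStarAlgebra.nonneg_iff_eq_star_mul_self.mp ha
    exact hpos b)
  have hF : ∀ a, F a = φ a := fun a => rfl
  refine ⟨F.GNS, inferInstance, inferInstance, inferInstance, F.gnsStarAlgHom,
    ((F.toPreGNS 1 : F.PreGNS) : F.GNS), ?_, ?_⟩
  · rw [UniformSpace.Completion.inner_coe, PositiveLinearMap.preGNS_inner_def]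
    simp [hF, h1]
  · intro a
    have : F.gnsStarAlgHom a ((F.toPreGNS 1 : F.PreGNS) : F.GNS)
        = ((F.leftMulMapPreGNS a (F.toPreGNS 1) : F.PreGNS) : F.GNS) :=
      F.gnsNonUnitalStarAlgHom_apply_coe
    rw [this, UniformSpace.Completion.inner_coe, PositiveLinearMap.preGNS_inner_def]
    simp [hF]

/-! ### Combinatorial part -/

/-- interval partitions of `{a, …, N-1}`. -/
def IsIP {N : ℕ} (a : ℕ) (s : Finset (Finset (Fin N))) : Prop :=
  (∀ B ∈ s, B.Nonempty) ∧ (∀ B ∈ s, ∀ C ∈ s, ∀ x ∈ B, x ∈ C → B = C) ∧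
  (∀ x : Fin N, (∃ B ∈ s, x ∈ B) ↔ a ≤ x.val) ∧
  (∀ B ∈ s, ∀ x ∈ B, ∀ z ∈ B, ∀ y : Fin N, x ≤ y → y ≤ z → y ∈ B)

/-- the interval `[a, b)`. -/
noncomputable def blk (N a b : ℕ) : Finset (Fin N) :=
  univ.filter fun x : Fin N => a ≤ x.val ∧ x.val < b

theorem mem_blk {N a b : ℕ} (x : Fin N) : x ∈ blk N a b ↔ a ≤ x.val ∧ x.val < b := by
  simp [blk]

/-- sum over interval partitions of `{a, …, N-1}`. -/
noncomputable def ipSum {N : ℕ} (g : Finset (Fin N) → ℂ) (a : ℕ) : ℂ :=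
  ∑ s : Finset (Finset (Fin N)) with IsIP a s, ∏ B ∈ s, g B

theorem ipSum_top {N : ℕ} (g : Finset (Fin N) → ℂ) : ipSum g N = 1 := by
  have : (univ.filter fun s : Finset (Finset (Fin N)) => IsIP N s) = {∅} := by
    ext s
    simp only [mem_filter, mem_univ, true_and, mem_singleton]
    constructor
    · rintro ⟨h1, _, h3, _⟩
      by_contra hne
      obtain ⟨B, hB⟩ := Finset.nonempty_iff_ne_empty.mpr hne
      obtain ⟨x, hx⟩ := h1 B hB
      have := (h3 x).mp ⟨B, hB, hx⟩
      have := x.isLt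
      omega
    · rintro rfl
      refine ⟨by simp, by simp, ?_, by simp⟩
      intro x
      have := x.isLt
      simp
  rw [ipSum, this]
  simp

theorem blk_notMem {N a b : ℕ} (hab : a < b) (haN : a < N) {s : Finset (Finset (Fin N))}
    (hs : IsIP b s) : blk N a b ∉ s := by
  intro h
  have := (hs.2.2.1 ⟨a, haN⟩).mp ⟨_, h, by simp [mem_blk, hab]⟩
  simp at this
  omega

theorem isIP_insert {N a b : ℕ} (hab : a < b) (haN : a < N) {s : Finset (Finset (Fin N))}
    (hs : IsIP b s) : IsIP a (insert (blk N a b) s) := by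
  obtain ⟨h1, h2, h3, h4⟩ := hs
  refine ⟨?_, ?_, ?_, ?_⟩
  · intro B hB
    rcases Finset.mem_insert.mp hB with rfl | hB
    · exact ⟨⟨a, haN⟩, by simp [mem_blk, hab]⟩
    · exact h1 B hB
  · intro B hB C hC x hxB hxC
    rcases Finset.mem_insert.mp hB with rfl | hB <;> rcases Finset.mem_insert.mp hC with rfl | hC
    · rfl
    · have := (h3 x).mp ⟨C, hC, hxC⟩
      have := (mem_blk x).mp hxB
      omega
    · have := (h3 x).mp ⟨B, hB, hxB⟩
      have := (mem_blk x).mp hxC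
      omega
    · exact h2 B hB C hC x hxB hxC
  · intro x
    constructor
    · rintro ⟨B, hB, hx⟩
      rcases Finset.mem_insert.mp hB with rfl | hB
      · exact ((mem_blk x).mp hx).1
      · have := (h3 x).mp ⟨B, hB, hx⟩
        omega
    · intro hx
      by_cases hxb : x.val < b
      · exact ⟨_, Finset.mem_insert_self _ _, (mem_blk x).mpr ⟨hx, hxb⟩⟩
      · obtain ⟨B, hB, hxB⟩ := (h3 x).mpr (by omega)
        exact ⟨B, Finset.mem_insert_of_mem hB, hxB⟩
  · intro B hB x hx z hz y hxy hyz
    rcases Finset.mem_insert.mp hB with rfl | hB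
    · rw [mem_blk] at hx hz ⊢
      rw [Fin.le_def] at hxy hyz
      omega
    · exact h4 B hB x hx z hz y hxy hyz

theorem isIP_decomp {N a : ℕ} (haN : a < N) {s : Finset (Finset (Fin N))}
    (hs : IsIP a s) : ∃ b, a < b ∧ b ≤ N ∧ ∃ s', IsIP b s' ∧ insert (blk N a b) s' = s := by
  obtain ⟨h1, h2, h3, h4⟩ := hs
  obtain ⟨B, hB, haB⟩ := (h3 ⟨a, haN⟩).mpr le_rfl
  set M := B.max' (h1 B hB) with hM
  have hMB : M ∈ B := B.max'_mem _
  have haM : a ≤ M.val := (h3 M).mp ⟨B, hB, hMB⟩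
  have hBeq : B = blk N a (M.val + 1) := by
    ext x
    rw [mem_blk]
    constructor
    · intro hx
      refine ⟨(h3 x).mp ⟨B, hB, hx⟩, ?_⟩
      have : x ≤ M := B.le_max' x hx
      rw [Fin.le_def] at this
      omega
    · rintro ⟨hx1, hx2⟩
      exact h4 B hB _ haB _ hMB x (Fin.le_def.mpr hx1) (Fin.le_def.mpr (by omega))
  refine ⟨M.val + 1, by omega, M.isLt, s.erase B, ⟨?_, ?_, ?_, ?_⟩, ?_⟩
  · intro C hC
    exact h1 C (Finset.mem_of_mem_erase hC)
  · intro C hC C' hC'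
    exact h2 C (Finset.mem_of_mem_erase hC) C' (Finset.mem_of_mem_erase hC')
  · intro x
    constructor
    · rintro ⟨C, hC, hx⟩
      have hCs := Finset.mem_of_mem_erase hC
      have hxa := (h3 x).mp ⟨C, hCs, hx⟩
      by_contra hlt
      have hxB : x ∈ B := by
        rw [hBeq, mem_blk]
        omega
      exact Finset.ne_of_mem_erase hC (h2 C hCs B hB x hx hxB)
    · intro hx
      obtain ⟨C, hC, hxC⟩ := (h3 x).mpr (by omega)
      refine ⟨C, Finset.mem_erase.mpr ⟨?_, hC⟩, hxC⟩
      rintro rfl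
      rw [hBeq, mem_blk] at hxC
      omega
  · intro C hC
    exact h4 C (Finset.mem_of_mem_erase hC)
  · rw [← hBeq]
    exact Finset.insert_erase hB

theorem isIP_insert_inj {N a b b' : ℕ} (hab : a < b) (hab' : a < b') (haN : a < N) (hb : b ≤ N)
    (hb' : b' ≤ N) {s s' : Finset (Finset (Fin N))} (hs : IsIP b s) (hs' : IsIP b' s')
    (h : insert (blk N a b) s = insert (blk N a b') s') : b = b' ∧ s = s' := by
  have h1 : blk N a b = blk N a b' := by
    refine (isIP_insert hab haN hs).2.1 _ (Finset.mem_insert_self _ _) _ ?_ ⟨a, haN⟩ ?_ ?_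
    · rw [h]
      exact Finset.mem_insert_self _ _
    · simp [mem_blk, hab]
    · simp [mem_blk, hab']
  have h2 : b = b' := by
    by_contra hne
    rcases Nat.lt_or_gt_of_ne hne with hlt | hlt
    · have := (Finset.ext_iff.mp h1 ⟨b, by omega⟩)
      simp only [mem_blk] at this
      omega
    · have := (Finset.ext_iff.mp h1 ⟨b', by omega⟩)
      simp only [mem_blk] at this
      omega
  subst h2
  refine ⟨rfl, ?_⟩
  rw [← Finset.erase_insert (blk_notMem hab haN hs), h,
    Finset.erase_insert (blk_notMem hab haN hs')]

theorem ipSum_step {N : ℕ} (g : Finset (Fin N) → ℂ) (a : ℕ) (haN : a < N) :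
    ipSum g a = ∑ j ∈ range (N - a), g (blk N a (a + 1 + j)) * ipSum g (a + 1 + j) := by
  simp only [ipSum, Finset.mul_sum]
  rw [Finset.sum_sigma']
  symm
  refine Finset.sum_bij (fun p _ => insert (blk N a (a + 1 + p.1)) p.2) ?_ ?_ ?_ ?_
  · rintro ⟨j, s⟩ hp
    simp only [mem_sigma, mem_range, mem_filter, mem_univ, true_and] at hp ⊢
    exact isIP_insert (by omega) haN hp.2
  · rintro ⟨j, s⟩ hp ⟨j', s'⟩ hp' heq
    simp only [mem_sigma, mem_range, mem_filter, mem_univ, true_and] at hp hp' heq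
    obtain ⟨h1, h2⟩ := isIP_insert_inj (by omega) (by omega) haN (by omega) (by omega) hp.2 hp'.2 heq
    have : j = j' := by omega
    subst this
    subst h2
    rfl
  · intro s hs
    simp only [mem_filter, mem_univ, true_and] at hs
    obtain ⟨b, hb1, hb2, s', hs', rfl⟩ := isIP_decomp haN hs
    obtain ⟨j, rfl⟩ : ∃ j, b = a + 1 + j := ⟨b - (a + 1), by omega⟩
    refine ⟨⟨j, s'⟩, ?_, rfl⟩
    simp only [mem_sigma, mem_range, mem_filter, mem_univ, true_and]
    exact ⟨by omega, hs'⟩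
  · rintro ⟨j, s⟩ hp
    simp only [mem_sigma, mem_range, mem_filter, mem_univ, true_and] at hp ⊢
    rw [Finset.prod_insert (blk_notMem (by omega) haN hp.2)]

/-- A series as a function on words. -/
noncomputable def onWords {k : ℕ} (f : NCSeries k) : List (Fin k) → ℂ
  | [] => 0
  | x :: L => f L.length (fun j => (x :: L).get j)

theorem onWords_eq {k : ℕ} (f : NCSeries k) (L : List (Fin k)) (n : ℕ) (u : Fin (n+1) → Fin k)
    (hL : L = List.ofFn u) : onWords f L = f n u := by
  cases L with
  | nil => simp at hL
  | cons x L =>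
    have hlen : L.length = n := by
      have := congrArg List.length hL
      simpa using this
    subst hlen
    simp only [onWords]
    congr 1
    funext j
    simp [hL, -List.ofFn_succ]

theorem partCoeff_eq {k m : ℕ} (f : NCSeries k) (w : Fin (m+1) → Fin k) (B : Finset (Fin (m+1)))
    (n : ℕ) (hn : B.card = n + 1) (e : Fin (n+1) → Fin (m+1)) (he : ∀ i, e i ∈ B)
    (hmono : StrictMono e) : partCoeff f w B = f n (w ∘ e) := by
  have hne : B.Nonempty := Finset.card_pos.mp (by omega)
  have hu := Finset.orderEmbOfFin_unique hn he hmono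
  rw [partCoeff, dif_pos hne]
  have hn' : n = B.card - 1 := by omega
  subst hn'
  congr 1
  funext j
  simp only [Function.comp, hu]
  rfl

theorem partCoeff_blk {k m : ℕ} (f : NCSeries k) (w : Fin (m+1) → Fin k) (a j : ℕ)
    (h : a + 1 + j ≤ m + 1) : partCoeff f w (blk (m+1) a (a + 1 + j)) =
      onWords f (((List.ofFn w).drop a).take (j + 1)) := by
  let e : Fin (j+1) → Fin (m+1) := fun i => ⟨a + i.val, by have := i.isLt; omega⟩
  have hmono : StrictMono e := by
    intro i i' hii
    simp only [e, Fin.lt_def] at hii ⊢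
    omega
  have himg : blk (m+1) a (a + 1 + j) = univ.image e := by
    ext x
    simp only [mem_blk, mem_image, mem_univ, true_and, e]
    constructor
    · intro hx
      exact ⟨⟨x.val - a, by omega⟩, by ext; simp; omega⟩
    · rintro ⟨i, rfl⟩
      have := i.isLt
      simp
      omega
  rw [partCoeff_eq f w _ j ?_ e ?_ hmono]
  · symm
    apply onWords_eq
    apply List.ext_getElem
    · simp
      omega
    · intro i h1 h2
      simp [e, -List.ofFn_succ]
  · rw [himg, Finset.card_image_of_injective _ hmono.injective]
    simp
  · intro i
    rw [himg]
    exact Finset.mem_image_of_mem _ (mem_univ _)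

theorem ipSum_wordSum {k m : ℕ} (f : NCSeries k) (w : Fin (m+1) → Fin k) (d : ℕ) :
    ∀ a, a + d = m + 1 → ipSum (partCoeff f w) a = wordSum (onWords f) ((List.ofFn w).drop a) := by
  induction d using Nat.strong_induction_on with
  | _ d ih =>
    intro a ha
    rcases Nat.eq_zero_or_pos d with rfl | hd
    · have : a = m + 1 := by omega
      subst this
      rw [ipSum_top, List.drop_eq_nil_of_le (by simp), wordSum_nil]
    · have haN : a < m + 1 := by omega
      rw [ipSum_step _ _ haN]
      have hdrop : (List.ofFn w).drop a = w ⟨a, haN⟩ :: (List.ofFn w).drop (a + 1) := by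
        rw [List.drop_eq_getElem_cons (by simpa using haN)]
        simp [-List.ofFn_succ]
      rw [hdrop, wordSum_cons]
      have hlen : ((List.ofFn w).drop (a + 1)).length + 1 = m + 1 - a := by
        simp
        omega
      rw [hlen]
      refine Finset.sum_congr rfl fun j hj => ?_
      have hj' := Finset.mem_range.mp hj
      rw [partCoeff_blk f w a j (by omega), ih (d - (1 + j)) (by omega) _ (by omega), hdrop,
        List.take_succ_cons, List.drop_drop]

theorem sum_interval_eq {k n : ℕ} (f : NCSeries k) (w : Fin (n+1) → Fin k) :
    (∑ π : FP (n+1), if IsIntervalPartition π then genCoeff f w π else 0)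
      = wordSum (onWords f) (List.ofFn w) := by
  have h0 := ipSum_wordSum f w (n+1) 0 (by omega)
  rw [List.drop_zero] at h0
  rw [← h0, ← Finset.sum_filter, ipSum]
  refine Finset.sum_bij (fun π _ => π.parts) ?_ ?_ ?_ ?_
  · intro π hπ
    simp only [mem_filter, mem_univ, true_and] at hπ ⊢
    refine ⟨fun B hB => π.nonempty_of_mem_parts hB, ?_, ?_, hπ⟩
    · intro B hB C hC x hxB hxC
      exact π.eq_of_mem_parts hB hC hxB hxC
    · intro x
      simp only [Nat.zero_le, iff_true]
      exact π.exists_mem (mem_univ x)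
  · intro π _ π' _ h
    exact Finpartition.ext h
  · intro s hs
    simp only [mem_filter, mem_univ, true_and] at hs
    obtain ⟨h1, h2, h3, h4⟩ := hs
    refine ⟨Finpartition.ofExistsUnique s (fun _ _ => Finset.subset_univ _) ?_ ?_, ?_, rfl⟩
    · intro x _
      obtain ⟨B, hB, hx⟩ := (h3 x).mpr (Nat.zero_le _)
      exact ⟨B, ⟨hB, hx⟩, fun C hC => h2 C hC.1 B hB x hC.2 hx⟩
    · intro h
      simpa using h1 _ h
    · simp only [mem_filter, mem_univ, true_and]
      exact h4
  · intro π _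
    rfl

theorem onWords_smul {k : ℕ} (f : NCSeries k) (c : ℂ) (L : List (Fin k)) :
    onWords (fun n w => c * f n w) L = c * onWords f L := by
  cases L <;> simp [onWords]

/-- Proposition 4.8: `E_c(k)` is closed under multiplication by
scalars `t ∈ (0,∞)` : if `f` is the `η`-series of some `μ ∈ D_c(k)` and `t > 0`, then
`t·f` is the `η`-series of some distribution in `D_c(k)`. -/
theorem statement7 (k : ℕ) (hk : 0 < k) (f : NCSeries k)
    (hf : ∃ μ : Dist k, IsDc μ ∧ IsEtaSeries μ f) (t : ℝ) (ht : 0 < t) :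
    ∃ ν : Dist k, IsDc ν ∧ IsEtaSeries ν (fun n w => (t : ℂ) * f n w) := by
  obtain ⟨μ, ⟨-, A, i1, i2, i3, i4, i5, i6, φ, x, hφ1, hφ, hx, hm⟩, hη⟩ := hf
  let _ : CStarAlgebra A := { i1, i2, i3, i4, i5, i6 with }
  obtain ⟨H, j1, j2, j3, π, Ω, hΩ, hπ⟩ := gns_exists φ hφ1 hφ
  let X : Fin k → H →L[ℂ] H := fun i => π (x i)
  let Y : Fin k → H →L[ℂ] H := fun i => opD Ω (√t) * X i * opD Ω (√t)
  let ψ : (H →L[ℂ] H) →ₗ[ℂ] ℂ :=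
    { toFun := fun T => inner ℂ Ω (T Ω)
      map_add' := fun S T => by simp [inner_add_right]
      map_smul' := fun c T => by simp [inner_smul_right] }
  have hψ : ∀ T, ψ T = inner ℂ Ω (T Ω) := fun T => rfl
  -- the eta coefficients of `μ`
  have hE : ∀ L : List (Fin k), wordSum (onWords f) L = wordSum (etaVec Ω X) L := by
    intro L
    have h1 := vecV_wordSum Ω hΩ X 1 L.length L le_rfl
    simp only [one_mul] at h1
    change _ = wordSum (etaVec Ω X) L at h1
    rw [← h1, vecV_one]
    cases L with
    | nil => simp [-inner_self_eq_norm_sq_to_K, wordSum_nil, hΩ]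
    | cons l L =>
      obtain ⟨w, hw⟩ : ∃ w : Fin (L.length + 1) → Fin k, l :: L = List.ofFn w :=
        ⟨(l :: L).get, (List.ofFn_get (l :: L)).symm⟩
      rw [hw, ← sum_interval_eq, ← hη, hm, hπ, map_list_prod, List.map_ofFn, List.map_ofFn]
      rfl
  have hf' : ∀ l L, onWords f (l :: L) = etaVec Ω X (l :: L) := fun l L =>
    wordSum_inj _ _ hE L.length l L le_rfl
  let ν : Dist k := ψ ∘ₗ (FreeAlgebra.lift ℂ Y).toLinearMap
  have hν : ∀ (n : ℕ) (w : Fin (n+1) → Fin k),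
      momentSeries ν n w = ψ ((List.ofFn fun j => Y (w j)).prod) := by
    intro n w
    simp only [momentSeries, ν, LinearMap.comp_apply, AlgHom.toLinearMap_apply, map_list_prod,
      List.map_ofFn]
    congr 3
    funext j
    simp
  refine ⟨ν, ⟨?_, H →L[ℂ] H, inferInstance, inferInstance, inferInstance, inferInstance,
    inferInstance, inferInstance, ψ, Y, ?_, ?_, ?_, hν⟩, ?_⟩
  · simp [-inner_self_eq_norm_sq_to_K, IsDalg, ν, hψ, hΩ]
  · simp [-inner_self_eq_norm_sq_to_K, hψ, hΩ]
  · intro T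
    rw [hψ, mul_apply_eq_comp, ContinuousLinearMap.star_eq_adjoint,
      ContinuousLinearMap.adjoint_inner_right, inner_self_eq_norm_sq_to_K]
    have : (0 : ℂ) ≤ ((‖T Ω‖ ^ 2 : ℝ) : ℂ) := Complex.zero_le_real.mpr (by positivity)
    simpa using this
  · intro i
    have hX : star (X i) = X i := by
      change star (π (x i)) = π (x i)
      rw [← map_star, (hx i).star_eq]
    have hD : star (opD Ω (√t)) = opD Ω (√t) := (opD_sa Ω (√t)).star_eq
    change star (opD Ω (√t) * X i * opD Ω (√t)) = opD Ω (√t) * X i * opD Ω (√t)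
    rw [star_mul, star_mul, hX, hD, mul_assoc]
  · intro n w
    rw [sum_interval_eq, hν, hψ]
    have h1 : (List.ofFn fun j => Y (w j)) =
        (List.ofFn w).map fun i => opD Ω (√t) * X i * opD Ω (√t) := by
      rw [List.map_ofFn]
      rfl
    rw [h1, opD_moment Ω hΩ X t ht, vecV_wordSum Ω hΩ X t _ _ le_rfl]
    refine wordSum_congr _ _ (fun l L => ?_) _ _ le_rfl
    rw [onWords_smul, hf']
end BBP
end

section
/- Let k be a positive integer and let μ ∈ D_alg(k). The following statements are equivalent: (1) there exists γ > 0 such that |μ(X_{i₁}⋯X_{i_n})| ≤ γⁿ for every n ≥ 1 and all i₁,…,i_n ∈ {1,…,k}; (2) there exists γ > 0 such that |Cf_{(i₁,…,i_n)}(R_μ)| ≤ γⁿ for every n ≥ 1 and all i₁,…,i_n; (3) there exists γ > 0 such that |Cf_{(i₁,…,i_n)}(η_μ)| ≤ γⁿ for every n ≥ 1 and all i₁,…,i_n. -/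
open Finset

attribute [local instance] Classical.propDecidable

open scoped ComplexOrder

namespace BBP

/-! ### Partitions of finite subsets of `ℕ` -/

/-- `P` is (the set of blocks of) a partition of `S`. -/
structure IsP (S : Finset ℕ) (P : Finset (Finset ℕ)) : Prop where
  ne : ∀ B ∈ P, B.Nonempty
  sub : ∀ B ∈ P, B ⊆ S
  cov : ∀ x ∈ S, ∃ B ∈ P, x ∈ B
  dis : ∀ B ∈ P, ∀ C ∈ P, ∀ x, x ∈ B → x ∈ C → B = C

/-- All the partitions of `S`. -/
noncomputable def Parts (S : Finset ℕ) : Finset (Finset (Finset ℕ)) :=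
  S.powerset.powerset.filter (IsP S)

theorem mem_Parts {S : Finset ℕ} {P : Finset (Finset ℕ)} : P ∈ Parts S ↔ IsP S P := by
  unfold Parts
  rw [Finset.mem_filter]
  constructor
  · exact fun h => h.2
  · intro h
    refine ⟨?_, h⟩
    rw [Finset.mem_powerset]
    intro B hB
    rw [Finset.mem_powerset]
    exact h.sub B hB

/-- Weight of a partition. -/
noncomputable def wt (φ : Finset ℕ → ℂ) (P : Finset (Finset ℕ)) : ℂ := ∏ B ∈ P, φ B

/-- The partitions with a given property. -/
noncomputable def PQ (S : Finset ℕ) (Q : Finset (Finset ℕ) → Prop) :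
    Finset (Finset (Finset ℕ)) := (Parts S).filter Q

theorem mem_PQ {S : Finset ℕ} {Q : Finset (Finset ℕ) → Prop} {P : Finset (Finset ℕ)} :
    P ∈ PQ S Q ↔ IsP S P ∧ Q P := by
  unfold PQ
  rw [Finset.mem_filter, mem_Parts]

/-- Sum of weights over all partitions with a given property. -/
noncomputable def psum (φ : Finset ℕ → ℂ) (S : Finset ℕ) (Q : Finset (Finset ℕ) → Prop) : ℂ :=
  ∑ P ∈ PQ S Q, wt φ P

theorem psum_congr (φ : Finset ℕ → ℂ) (S : Finset ℕ) {Q Q' : Finset (Finset ℕ) → Prop}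
    (h : ∀ P, IsP S P → (Q P ↔ Q' P)) : psum φ S Q = psum φ S Q' := by
  unfold psum
  congr 1
  ext P
  rw [mem_PQ, mem_PQ]
  exact and_congr_right (h P)

theorem isP_insert {S B : Finset ℕ} (hB : B.Nonempty) (hBS : B ⊆ S) {P : Finset (Finset ℕ)}
    (hP : IsP (S \ B) P) : IsP S (insert B P) := by
  constructor
  · intro C hC
    rcases Finset.mem_insert.1 hC with rfl | hC
    · exact hB
    · exact hP.ne C hC
  · intro C hC
    rcases Finset.mem_insert.1 hC with rfl | hC
    · exact hBS
    · exact (hP.sub C hC).trans Finset.sdiff_subset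
  · intro x hx
    by_cases hxB : x ∈ B
    · exact ⟨B, Finset.mem_insert_self _ _, hxB⟩
    · obtain ⟨C, hC, hxC⟩ := hP.cov x (Finset.mem_sdiff.2 ⟨hx, hxB⟩)
      exact ⟨C, Finset.mem_insert_of_mem hC, hxC⟩
  · intro C hC D hD x hxC hxD
    rcases Finset.mem_insert.1 hC with hC' | hC' <;> rcases Finset.mem_insert.1 hD with hD' | hD'
    · rw [hC', hD']
    · subst hC'
      exact absurd hxC (Finset.mem_sdiff.1 (hP.sub D hD' hxD)).2
    · subst hD'
      exact absurd hxD (Finset.mem_sdiff.1 (hP.sub C hC' hxC)).2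
    · exact hP.dis C hC' D hD' x hxC hxD

theorem isP_erase {S B : Finset ℕ} {P : Finset (Finset ℕ)}
    (hP : IsP S P) (hB : B ∈ P) : IsP (S \ B) (P.erase B) := by
  constructor
  · intro C hC
    exact hP.ne C (Finset.mem_of_mem_erase hC)
  · intro C hC x hx
    refine Finset.mem_sdiff.2 ⟨hP.sub C (Finset.mem_of_mem_erase hC) hx, fun hxB => ?_⟩
    exact Finset.ne_of_mem_erase hC (hP.dis C (Finset.mem_of_mem_erase hC) B hB x hx hxB)
  · intro x hx
    obtain ⟨C, hC, hxC⟩ := hP.cov x (Finset.mem_sdiff.1 hx).1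
    refine ⟨C, Finset.mem_erase.2 ⟨?_, hC⟩, hxC⟩
    rintro rfl
    exact (Finset.mem_sdiff.1 hx).2 hxC
  · intro C hC D hD
    exact hP.dis C (Finset.mem_of_mem_erase hC) D (Finset.mem_of_mem_erase hD)

theorem not_mem_of_isP_sdiff {S B : Finset ℕ} (hB : B.Nonempty) {P : Finset (Finset ℕ)}
    (hP : IsP (S \ B) P) : B ∉ P := by
  intro h
  obtain ⟨x, hx⟩ := hB
  exact (Finset.mem_sdiff.1 (hP.sub B h hx)).2 hx

/-- Splitting off one block. -/
theorem psum_block (φ : Finset ℕ → ℂ) {S B : Finset ℕ} (hB : B.Nonempty) (hBS : B ⊆ S)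
    {Q Q' : Finset (Finset ℕ) → Prop}
    (h : ∀ P, IsP (S \ B) P → (Q (insert B P) ↔ Q' P)) :
    psum φ S (fun P => B ∈ P ∧ Q P) = φ B * psum φ (S \ B) Q' := by
  unfold psum
  rw [Finset.mul_sum]
  refine Finset.sum_bij' (fun P _ => P.erase B) (fun P _ => insert B P) ?_ ?_ ?_ ?_ ?_
  · intro P hP
    obtain ⟨hP, hBP, hQ⟩ := mem_PQ.1 hP
    have h1 := isP_erase hP hBP
    refine mem_PQ.2 ⟨h1, ?_⟩
    rw [← h _ h1, Finset.insert_erase hBP]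
    exact hQ
  · intro P hP
    obtain ⟨hP, hQ⟩ := mem_PQ.1 hP
    exact mem_PQ.2 ⟨isP_insert hB hBS hP, Finset.mem_insert_self _ _,
      (h P hP).2 hQ⟩
  · intro P hP
    obtain ⟨hP, hBP, hQ⟩ := mem_PQ.1 hP
    exact Finset.insert_erase hBP
  · intro P hP
    obtain ⟨hP, hQ⟩ := mem_PQ.1 hP
    exact Finset.erase_insert (not_mem_of_isP_sdiff hB hP)
  · intro P hP
    obtain ⟨hP, hBP, hQ⟩ := mem_PQ.1 hP
    unfold wt
    rw [Finset.mul_prod_erase P φ hBP]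

/-- Splitting according to which one of a family of alternatives holds. -/
theorem psum_split (φ : Finset ℕ → ℂ) (S T : Finset ℕ) (Q : Finset (Finset ℕ) → Prop)
    (R : ℕ → Finset (Finset ℕ) → Prop)
    (hR : ∀ P, IsP S P → (Q P ↔ ∃ b ∈ T, R b P))
    (hu : ∀ P, IsP S P → ∀ b ∈ T, ∀ c ∈ T, R b P → R c P → b = c) :
    psum φ S Q = ∑ b ∈ T, psum φ S (R b) := by
  unfold psum
  rw [← Finset.sum_biUnion]
  · congr 1
    ext P
    simp only [mem_PQ, Finset.mem_biUnion]
    constructor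
    · rintro ⟨h1, h2⟩
      obtain ⟨b, hb, hR⟩ := (hR P h1).1 h2
      exact ⟨b, hb, h1, hR⟩
    · rintro ⟨b, hb, h1, h2⟩
      exact ⟨h1, (hR P h1).2 ⟨b, hb, h2⟩⟩
  · intro b hb c hc hbc
    rw [Function.onFun, Finset.disjoint_left]
    intro P h1 h2
    rw [mem_PQ] at h1 h2
    exact hbc (hu P h1.1 b hb c hc h1.2 h2.2)

theorem psum_or (φ : Finset ℕ → ℂ) (S : Finset ℕ) (Q A : Finset (Finset ℕ) → Prop) :
    psum φ S Q = psum φ S (fun P => Q P ∧ A P) + psum φ S (fun P => Q P ∧ ¬ A P) := by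
  unfold psum
  rw [← Finset.sum_filter_add_sum_filter_not _ A]
  congr 2
  · ext P
    rw [Finset.mem_filter, mem_PQ, mem_PQ, and_assoc]
  · ext P
    rw [Finset.mem_filter, mem_PQ, mem_PQ, and_assoc]

/-- The interval `S ∩ [b,t]`. -/
noncomputable def seg (S : Finset ℕ) (b t : ℕ) : Finset ℕ := S.filter (fun y => b ≤ y ∧ y ≤ t)

theorem mem_seg {S : Finset ℕ} {b t y : ℕ} : y ∈ seg S b t ↔ y ∈ S ∧ b ≤ y ∧ y ≤ t := by
  simp [seg]

/-- `B` is an interval of `S`. -/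
def Cvx (S B : Finset ℕ) : Prop := ∀ x ∈ B, ∀ z ∈ B, ∀ y ∈ S, x ≤ y → y ≤ z → y ∈ B

/-- non-crossing. -/
def NCr (P : Finset (Finset ℕ)) : Prop :=
  ∀ B ∈ P, ∀ C ∈ P, ∀ i ∈ B, ∀ j ∈ C, ∀ k ∈ B, ∀ l ∈ C, i < j → j < k → k < l → B = C

/-- `B` is an interval of `S` without the minimum of `S`. -/
def Bad (S B : Finset ℕ) : Prop := Cvx S B ∧ ∃ s ∈ S, ∀ x ∈ B, s < x

/-- no bad block to the left of `t`. -/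
def NoBad (S : Finset ℕ) (t : ℕ) (P : Finset (Finset ℕ)) : Prop :=
  ∀ B ∈ P, (∀ x ∈ B, x < t) → ¬ Bad S B

/-- Sum over noncrossing partitions without bad blocks to the left of `t`. -/
noncomputable def hh (φ : Finset ℕ → ℂ) (S : Finset ℕ) (t : ℕ) : ℂ :=
  psum φ S (fun P => NCr P ∧ NoBad S t P)

theorem cvx_eq_seg {S B : Finset ℕ} (hBS : B ⊆ S) (hc : Cvx S B) {t : ℕ} (ht : t ∈ B)
    (hm : ∀ x ∈ B, x ≤ t) : ∃ b ∈ B, B = seg S b t := by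
  refine ⟨B.min' ⟨t, ht⟩, Finset.min'_mem _ _, ?_⟩
  ext y
  rw [mem_seg]
  constructor
  · intro hy
    exact ⟨hBS hy, Finset.min'_le _ _ hy, hm y hy⟩
  · rintro ⟨h1, h2, h3⟩
    exact hc _ (Finset.min'_mem _ _) _ ht y h1 h2 h3

theorem seg_inj {S : Finset ℕ} {b c t : ℕ} (hb : b ∈ S) (hc : c ∈ S) (hbt : b ≤ t) (hct : c ≤ t)
    (h : seg S b t = seg S c t) : b = c := by
  have h1 : b ∈ seg S c t := h ▸ mem_seg.2 ⟨hb, le_rfl, hbt⟩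
  have h2 : c ∈ seg S b t := h ▸ mem_seg.2 ⟨hc, le_rfl, hct⟩
  have := (mem_seg.1 h1).2.1
  have := (mem_seg.1 h2).2.1
  omega

theorem seg_cvx (S : Finset ℕ) (b t : ℕ) : Cvx S (seg S b t) := by
  intro x hx z hz y hy h1 h2
  rw [mem_seg] at *
  exact ⟨hy, by omega, by omega⟩

theorem seg_block_iff {S : Finset ℕ} {b t : ℕ} (htS : t ∈ S) (hbt : b ≤ t)
    (P : Finset (Finset ℕ)) (hP : IsP (S \ seg S b t) P) :
    (NCr (insert (seg S b t) P) ∧ NoBad S t (insert (seg S b t) P)) ↔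
      (NCr P ∧ NoBad (S \ seg S b t) b P) := by
  have hsd : ∀ C ∈ P, ∀ x ∈ C, x ∈ S ∧ ¬ (b ≤ x ∧ x ≤ t) := by
    intro C hC x hx
    have := Finset.mem_sdiff.1 (hP.sub C hC hx)
    exact ⟨this.1, fun h => this.2 (mem_seg.2 ⟨this.1, h⟩)⟩
  constructor
  · rintro ⟨h1, h2⟩
    refine ⟨fun B hB C hC => h1 B (Finset.mem_insert_of_mem hB) C (Finset.mem_insert_of_mem hC),
      ?_⟩
    intro C hC hlt ⟨hcv, s, hsS, hsC⟩
    refine h2 C (Finset.mem_insert_of_mem hC) (fun x hx => (hlt x hx).trans_le hbt) ⟨?_, s,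
      (Finset.mem_sdiff.1 hsS).1, hsC⟩
    intro x hx z hz y hy hxy hyz
    refine hcv x hx z hz y (Finset.mem_sdiff.2 ⟨hy, fun h => ?_⟩) hxy hyz
    have := hlt z hz
    have := (mem_seg.1 h).2.1
    omega
  · rintro ⟨h1, h2⟩
    constructor
    · intro B hB C hC i hi j hj k hk l hl hij hjk hkl
      rcases Finset.mem_insert.1 hB with rfl | hB <;> rcases Finset.mem_insert.1 hC with rfl | hC
      · rfl
      · have := hsd C hC j hj
        rw [mem_seg] at hi hk
        omega
      · have := hsd B hB k hk
        rw [mem_seg] at hj hl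
        omega
      · exact h1 B hB C hC i hi j hj k hk l hl hij hjk hkl
    · intro C hC hlt ⟨hcv, s, hsS, hsC⟩
      rcases Finset.mem_insert.1 hC with rfl | hC
      · exact absurd (hlt t (mem_seg.2 ⟨htS, hbt, le_rfl⟩)) (lt_irrefl _)
      · have hltb : ∀ x ∈ C, x < b := by
          intro x hx
          have := hsd C hC x hx
          have := hlt x hx
          omega
        obtain ⟨x0, hx0⟩ := hP.ne C hC
        refine h2 C hC hltb ⟨fun x hx z hz y hy => hcv x hx z hz y (Finset.mem_sdiff.1 hy).1, s,
          Finset.mem_sdiff.2 ⟨hsS, fun h => ?_⟩, hsC⟩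
        have := hltb x0 hx0
        have := hsC x0 hx0
        have := (mem_seg.1 h).2.1
        omega

/-- The basic recursion. -/
theorem hh_step (φ : Finset ℕ → ℂ) {S : Finset ℕ} {t : ℕ} (htS : t ∈ S) :
    hh φ S t = hh φ S (t+1) + ∑ b ∈ S.filter (fun b => b ≤ t ∧ ∃ s ∈ S, s < b),
      φ (seg S b t) * hh φ (S \ seg S b t) b := by
  unfold hh
  rw [psum_or φ S _ (NoBad S (t+1))]
  congr 1
  · apply psum_congr
    intro P hP
    constructor
    · rintro ⟨⟨h1, h2⟩, h3⟩
      exact ⟨h1, h3⟩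
    · rintro ⟨h1, h3⟩
      exact ⟨⟨h1, fun B hB hlt => h3 B hB fun x hx => (hlt x hx).trans (Nat.lt_succ_self t)⟩, h3⟩
  · rw [psum_split φ S (S.filter (fun b => b ≤ t ∧ ∃ s ∈ S, s < b)) _
      (fun b P => seg S b t ∈ P ∧ (NCr P ∧ NoBad S t P))]
    · apply Finset.sum_congr rfl
      intro b hb
      obtain ⟨hbS, hbt, hs⟩ := Finset.mem_filter.1 hb
      apply psum_block φ ⟨b, mem_seg.2 ⟨hbS, le_rfl, hbt⟩⟩ (fun x hx => (mem_seg.1 hx).1)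
      intro P hP
      exact seg_block_iff htS hbt P hP
    · intro P hP
      constructor
      · rintro ⟨⟨h1, h2⟩, h3⟩
        unfold NoBad at h3
        push Not at h3
        obtain ⟨B, hB, hlt, hbad⟩ := h3
        have htB : t ∈ B := by
          by_contra hn
          refine h2 B hB (fun x hx => ?_) hbad
          have := hlt x hx
          have : x ≠ t := by rintro rfl; exact hn hx
          omega
        obtain ⟨b, hb, hBe⟩ := cvx_eq_seg (hP.sub B hB) hbad.1 htB
          (fun x hx => Nat.lt_succ_iff.1 (hlt x hx))
        obtain ⟨s, hs, hsB⟩ := hbad.2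
        exact ⟨b, Finset.mem_filter.2 ⟨hP.sub B hB hb, Nat.lt_succ_iff.1 (hlt b hb), s, hs,
          hsB b hb⟩, hBe ▸ hB, h1, h2⟩
      · rintro ⟨b, hb, hB, h1, h2⟩
        obtain ⟨hbS, hbt, s, hs, hsb⟩ := Finset.mem_filter.1 hb
        refine ⟨⟨h1, h2⟩, fun h3 => h3 _ hB (fun x hx => ?_) ⟨seg_cvx S b t, s, hs, fun x hx => ?_⟩⟩
        · have := (mem_seg.1 hx).2.2
          omega
        · have := (mem_seg.1 hx).2.1
          omega
    · rintro P hP b hb c hc ⟨h1, -⟩ ⟨h2, -⟩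
      obtain ⟨hbS, hbt, -⟩ := Finset.mem_filter.1 hb
      obtain ⟨hcS, hct, -⟩ := Finset.mem_filter.1 hc
      exact seg_inj hbS hcS hbt hct (hP.dis _ h1 _ h2 t (mem_seg.2 ⟨htS, hbt, le_rfl⟩)
        (mem_seg.2 ⟨htS, hct, le_rfl⟩))

theorem hh_skip (φ : Finset ℕ → ℂ) {S : Finset ℕ} {t : ℕ} (htS : t ∉ S) :
    hh φ S (t+1) = hh φ S t := by
  apply psum_congr
  intro P hP
  refine and_congr_right fun _ => ?_
  constructor
  · intro h B hB hlt
    exact h B hB fun x hx => (hlt x hx).trans (Nat.lt_succ_self t)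
  · intro h B hB hlt
    refine h B hB fun x hx => ?_
    have := hlt x hx
    have : x ≠ t := by rintro rfl; exact htS (hP.sub B hB hx)
    omega

/-- The sum over all noncrossing partitions. -/
theorem hh_start (φ : Finset ℕ → ℂ) {S : Finset ℕ} {t : ℕ} (h : ∀ s ∈ S, t ≤ s + 1) :
    hh φ S t = psum φ S NCr := by
  apply psum_congr
  intro P hP
  refine ⟨fun h => h.1, fun h1 => ⟨h1, fun B hB hlt ⟨_, s, hs, hsB⟩ => ?_⟩⟩
  obtain ⟨x, hx⟩ := hP.ne B hB
  have := hlt x hx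
  have := hsB x hx
  have := h s hs
  omega

theorem isP_single {S : Finset ℕ} (hS : S.Nonempty) : IsP S {S} := by
  constructor <;> simp [hS]

theorem isP_eq_single {S : Finset ℕ} (hS : S.Nonempty) {P : Finset (Finset ℕ)} (hP : IsP S P)
    (h : ∀ B ∈ P, ∀ C ∈ P, B = C) : P = {S} := by
  obtain ⟨x, hx⟩ := hS
  obtain ⟨B, hB, hxB⟩ := hP.cov x hx
  have hBS : B = S := by
    apply Finset.Subset.antisymm (hP.sub B hB)
    intro y hy
    obtain ⟨C, hC, hyC⟩ := hP.cov y hy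
    rwa [h B hB C hC]
  subst hBS
  ext C
  rw [Finset.mem_singleton]
  exact ⟨fun hC => h C hC B hB, fun hC => hC ▸ hB⟩

theorem hh_end (φ : Finset ℕ → ℂ) {S : Finset ℕ} (hS : S.Nonempty) {t : ℕ}
    (h : ∀ s ∈ S, s < t) : hh φ S t = φ S := by
  have key : PQ S (fun P => NCr P ∧ NoBad S t P) = {{S}} := by
    ext P
    rw [mem_PQ, Finset.mem_singleton]
    constructor
    · rintro ⟨hP, h1, h2⟩
      -- minima of blocks
      set M := S.filter (fun x => ∀ B ∈ P, x ∈ B → ∀ y ∈ B, x ≤ y) with hM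
      have hmin : ∀ B ∈ P, ∃ x ∈ B, x ∈ M ∧ ∀ y ∈ B, x ≤ y := by
        intro B hB
        have hne := hP.ne B hB
        refine ⟨B.min' hne, Finset.min'_mem _ _, Finset.mem_filter.2 ⟨hP.sub B hB
          (Finset.min'_mem _ _), ?_⟩, fun y hy => Finset.min'_le _ _ hy⟩
        intro C hC hx y hy
        have := hP.dis B hB C hC _ (Finset.min'_mem _ _) hx
        subst this
        exact Finset.min'_le _ _ hy
      have hMne : M.Nonempty := by
        obtain ⟨x, hx⟩ := hS
        obtain ⟨B, hB, hxB⟩ := hP.cov x hx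
        obtain ⟨y, -, hy, -⟩ := hmin B hB
        exact ⟨y, hy⟩
      set b := M.max' hMne with hb
      have hbM : b ∈ M := Finset.max'_mem _ _
      obtain ⟨hbS, hbmin⟩ := Finset.mem_filter.1 hbM
      obtain ⟨B, hB, hbB⟩ := hP.cov b hbS
      have hBmin := hbmin B hB hbB
      have hcv : Cvx S B := by
        intro x hx z hz y hy hxy hyz
        by_contra hyB
        obtain ⟨C, hC, hyC⟩ := hP.cov y hy
        obtain ⟨c, hcC, hcM, hcmin⟩ := hmin C hC
        have hcb : c ≤ b := Finset.le_max' _ _ hcM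
        have hne : C ≠ B := by rintro rfl; exact hyB hyC
        have hcx : c ≠ b := by
          intro hcb
          exact hne (hP.dis C hC B hB c hcC (hcb ▸ hbB))
        have h3 := hBmin x hx
        have hxy' : x ≠ y := by rintro rfl; exact hyB hx
        have hyz' : y ≠ z := by rintro rfl; exact hyB hz
        exact hne (h1 C hC B hB c hcC x hx y hyC z hz (by omega) (by omega) (by omega))
      have hnb := h2 B hB (fun x hx => h x (hP.sub B hB hx))
      have hall : ∀ s ∈ S, b ≤ s := by
        intro s hs
        by_contra hlt
        exact hnb ⟨hcv, s, hs, fun x hx => (not_le.1 hlt).trans_le (hBmin x hx)⟩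
      have hBall : ∀ C ∈ P, C = B := by
        intro C hC
        obtain ⟨c, hcC, hcM, hcmin⟩ := hmin C hC
        have hcb : c ≤ b := Finset.le_max' _ _ hcM
        have : c = b := le_antisymm hcb (hall c (hP.sub C hC hcC))
        exact hP.dis C hC B hB c hcC (this ▸ hbB)
      exact isP_eq_single hS hP (fun C hC D hD => (hBall C hC).trans (hBall D hD).symm)
    · rintro rfl
      refine ⟨isP_single hS, ?_, ?_⟩
      · intro B hB C hC _ _ _ _ _ _ _ _ _ _ _
        rw [Finset.mem_singleton] at hB hC
        rw [hB, hC]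
      · intro B hB _ ⟨_, s, hs, hsB⟩
        rw [Finset.mem_singleton] at hB
        subst hB
        exact lt_irrefl _ (hsB s hs)
  unfold hh psum
  rw [key, Finset.sum_singleton]
  simp [wt]

/-! ### Interval partitions -/

/-- All blocks are intervals of `S`. -/
def AllCvx (S : Finset ℕ) (P : Finset (Finset ℕ)) : Prop := ∀ B ∈ P, Cvx S B

theorem int_step (φ : Finset ℕ → ℂ) {S : Finset ℕ} {t : ℕ} (htS : t ∈ S) (hmax : ∀ s ∈ S, s ≤ t) :
    psum φ S (AllCvx S) =
      ∑ b ∈ S, φ (seg S b t) * psum φ (S \ seg S b t) (AllCvx (S \ seg S b t)) := by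
  rw [psum_split φ S S _ (fun b P => seg S b t ∈ P ∧ AllCvx S P)]
  · apply Finset.sum_congr rfl
    intro b hb
    have hbt := hmax b hb
    apply psum_block φ ⟨b, mem_seg.2 ⟨hb, le_rfl, hbt⟩⟩ (fun x hx => (mem_seg.1 hx).1)
    intro P hP
    constructor
    · intro h C hC x hx z hz y hy
      exact h C (Finset.mem_insert_of_mem hC) x hx z hz y (Finset.mem_sdiff.1 hy).1
    · intro h C hC
      rcases Finset.mem_insert.1 hC with rfl | hC
      · exact seg_cvx S b t
      · intro x hx z hz y hy hxy hyz
        refine h C hC x hx z hz y (Finset.mem_sdiff.2 ⟨hy, fun hyseg => ?_⟩) hxy hyz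
        have h1 := Finset.mem_sdiff.1 (hP.sub C hC hz)
        apply h1.2
        rw [mem_seg] at hyseg ⊢
        exact ⟨h1.1, by omega, hmax z h1.1⟩
  · intro P hP
    constructor
    · intro h
      obtain ⟨B, hB, htB⟩ := hP.cov t htS
      obtain ⟨b, hb, hBe⟩ := cvx_eq_seg (hP.sub B hB) (h B hB) htB
          (fun x hx => hmax x (hP.sub B hB hx))
      exact ⟨b, hP.sub B hB hb, hBe ▸ hB, h⟩
    · rintro ⟨b, hb, -, h⟩
      exact h
  · rintro P hP b hb c hc ⟨h1, -⟩ ⟨h2, -⟩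
    have hbt := hmax b hb
    have hct := hmax c hc
    exact seg_inj hb hc hbt hct (hP.dis _ h1 _ h2 t (mem_seg.2 ⟨htS, hbt, le_rfl⟩)
        (mem_seg.2 ⟨htS, hct, le_rfl⟩))

theorem int_empty (φ : Finset ℕ → ℂ) : psum φ ∅ (AllCvx ∅) = 1 := by
  have key : PQ ∅ (AllCvx ∅) = {∅} := by
    ext P
    rw [mem_PQ, Finset.mem_singleton]
    constructor
    · rintro ⟨hP, -⟩
      rw [Finset.eq_empty_iff_forall_notMem]
      intro B hB
      obtain ⟨x, hx⟩ := hP.ne B hB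
      exact absurd (hP.sub B hB hx) (Finset.notMem_empty x)
    · rintro rfl
      exact ⟨by constructor <;> simp, by intro B hB; simp at hB⟩
  unfold psum
  rw [key, Finset.sum_singleton]
  simp [wt]

/-! ### Bounds -/

noncomputable def pc (S : Finset ℕ) (t : ℕ) : ℕ := (S.filter (fun x => x < t)).card
noncomputable def qc (S : Finset ℕ) (t : ℕ) : ℕ := (S.filter (fun x => t ≤ x)).card

theorem pc_add_qc (S : Finset ℕ) (t : ℕ) : pc S t + qc S t = S.card := by
  unfold pc qc
  rw [← Finset.card_filter_add_card_filter_not (s := S) (fun x => x < t)]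
  simp only [not_lt]

theorem pc_succ {S : Finset ℕ} {t : ℕ} (ht : t ∈ S) : pc S (t+1) = pc S t + 1 := by
  unfold pc
  have : S.filter (fun x => x < t + 1) = insert t (S.filter (fun x => x < t)) := by
    ext x
    simp only [Finset.mem_filter, Finset.mem_insert]
    constructor
    · rintro ⟨h1, h2⟩
      by_cases h : x = t
      · exact Or.inl h
      · exact Or.inr ⟨h1, by omega⟩
    · rintro (rfl | ⟨h1, h2⟩)
      · exact ⟨ht, by omega⟩
      · exact ⟨h1, by omega⟩
  rw [this, Finset.card_insert_of_notMem (by simp)]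

theorem pc_skip {S : Finset ℕ} {t : ℕ} (ht : t ∉ S) : pc S (t+1) = pc S t := by
  unfold pc
  congr 1
  ext x
  simp only [Finset.mem_filter]
  refine and_congr_right fun h1 => ?_
  have : x ≠ t := by rintro rfl; exact ht h1
  omega

theorem card_sdiff_seg (S : Finset ℕ) (b t : ℕ) :
    (S \ seg S b t).card + (seg S b t).card = S.card :=
  Finset.card_sdiff_add_card_eq_card (fun x hx => (mem_seg.1 hx).1)

theorem qc_sdiff {S : Finset ℕ} {b t : ℕ} (hbt : b ≤ t) :
    qc (S \ seg S b t) b = qc S (t+1) := by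
  unfold qc
  congr 1
  ext x
  simp only [Finset.mem_filter, Finset.mem_sdiff, mem_seg]
  constructor
  · rintro ⟨⟨h1, h2⟩, h3⟩
    refine ⟨h1, ?_⟩
    by_contra h
    exact h2 ⟨h1, h3, by omega⟩
  · rintro ⟨h1, h2⟩
    exact ⟨⟨h1, fun h => by omega⟩, by omega⟩

theorem pc_pos {S : Finset ℕ} {t s : ℕ} (hs : s ∈ S) (hst : s < t) : 1 ≤ pc S t :=
  Finset.card_pos.2 ⟨s, Finset.mem_filter.2 ⟨hs, hst⟩⟩

theorem exists_of_pc {S : Finset ℕ} {t : ℕ} (h : 1 ≤ pc S t) : ∃ s ∈ S, s < t := by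
  obtain ⟨s, hs⟩ := Finset.card_pos.1 h
  exact ⟨s, Finset.mem_filter.1 hs⟩

theorem sum_seg_le {S T : Finset ℕ} {t N : ℕ} (hTS : T ⊆ S) (hTt : ∀ b ∈ T, b ≤ t)
    (hN : ∀ b ∈ T, (seg S b t).card ≤ N) (F : ℕ → ℝ) (hF : ∀ j, 0 ≤ F j) :
    ∑ b ∈ T, F (seg S b t).card ≤ ∑ j ∈ Finset.range N, F (j+1) := by
  have hpos : ∀ b ∈ T, 1 ≤ (seg S b t).card := fun b hb =>
    Finset.card_pos.2 ⟨b, mem_seg.2 ⟨hTS hb, le_rfl, hTt b hb⟩⟩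
  have hlt : ∀ b ∈ T, ∀ c ∈ T, b < c → (seg S c t).card < (seg S b t).card := by
    intro b hb c hc hbc
    apply Finset.card_lt_card
    rw [Finset.ssubset_iff_of_subset]
    · refine ⟨b, mem_seg.2 ⟨hTS hb, le_rfl, hTt b hb⟩, fun h => ?_⟩
      have := (mem_seg.1 h).2.1
      omega
    · intro x hx
      rw [mem_seg] at *
      exact ⟨hx.1, by omega, hx.2.2⟩
  have hinj : Set.InjOn (fun b => (seg S b t).card - 1) (T : Set ℕ) := by
    intro b hb c hc h
    have hb' := hpos b hb
    have hc' := hpos c hc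
    simp only at h
    rcases lt_trichotomy b c with h1 | h1 | h1
    · have := hlt b hb c hc h1
      omega
    · exact h1
    · have := hlt c hc b hb h1
      omega
  calc ∑ b ∈ T, F (seg S b t).card
      = ∑ b ∈ T, F (((seg S b t).card - 1) + 1) := by
        apply Finset.sum_congr rfl
        intro b hb
        rw [Nat.sub_add_cancel (hpos b hb)]
    _ = ∑ j ∈ T.image (fun b => (seg S b t).card - 1), F (j+1) := by
        rw [Finset.sum_image hinj]
    _ ≤ ∑ j ∈ Finset.range N, F (j+1) := by
        apply Finset.sum_le_sum_of_subset_of_nonneg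
        · intro j hj
          obtain ⟨b, hb, rfl⟩ := Finset.mem_image.1 hj
          have := hpos b hb
          have := hN b hb
          rw [Finset.mem_range]
          omega
        · intro j _ _
          exact hF _

/-- The majorant. -/
noncomputable def aa (γ : ℝ) (p : ℕ) : ℝ := 1/2 * (2*γ)^p * (catalan (p-1) : ℝ)

theorem aa_nonneg {γ : ℝ} (hγ : 0 < γ) (p : ℕ) : 0 ≤ aa γ p := by
  unfold aa
  positivity

theorem catalan_mono_succ (r : ℕ) : catalan r ≤ catalan (r+1) := by
  rw [catalan_succ]
  have := Finset.single_le_sum (f := fun i : Fin r.succ => catalan i * catalan (r - i))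
    (fun i _ => Nat.zero_le _) (Finset.mem_univ (0 : Fin r.succ))
  simpa using this

theorem aa_rec {γ : ℝ} (hγ : 0 < γ) (r : ℕ) :
    γ * aa γ (r+1) + ∑ j ∈ Finset.range (r+1), aa γ (j+1) * aa γ (r+2-(j+1)) ≤ aa γ (r+2) := by
  have h1 : ∑ j ∈ Finset.range (r+1), aa γ (j+1) * aa γ (r+2-(j+1))
      = 1/4 * (2*γ)^(r+2) * (catalan (r+1) : ℝ) := by
    rw [catalan_succ, ← Fin.sum_univ_eq_sum_range (fun j => aa γ (j+1) * aa γ (r+2-(j+1)))]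
    push_cast
    rw [Finset.mul_sum]
    apply Finset.sum_congr rfl
    intro i _
    have hi : (i : ℕ) ≤ r := Nat.lt_succ_iff.1 i.2
    unfold aa
    obtain ⟨d, hd⟩ := Nat.exists_eq_add_of_le hi
    have e1 : r + 1 - (i : ℕ) = d + 1 := by omega
    have e2 : r - (i : ℕ) = d := by omega
    have e3 : r + 2 = ((i : ℕ) + 1) + (d + 1) := by omega
    rw [e1, e2]
    simp only [Nat.add_sub_cancel]
    rw [e3, pow_add (2*γ) ((i : ℕ) + 1)]
    ring
  rw [h1]
  unfold aa
  have h2 : (catalan r : ℝ) ≤ catalan (r+1) := by exact_mod_cast catalan_mono_succ r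
  have e : r + 2 - 1 = r + 1 := by omega
  rw [e]
  simp only [Nat.add_sub_cancel]
  have h3 : γ * (1/2 * (2*γ)^(r+1) * (catalan r : ℝ)) ≤ 1/4 * (2*γ)^(r+2) * (catalan (r+1) : ℝ) := by
    have : γ * (1/2 * (2*γ)^(r+1) * (catalan r : ℝ)) = 1/4 * (2*γ)^(r+2) * (catalan r : ℝ) := by
      ring
    rw [this]
    gcongr
  nlinarith [h3]

theorem aa_le {γ : ℝ} (hγ : 0 < γ) (p : ℕ) : aa γ p ≤ (8*γ)^p := by
  have h1 : catalan (p-1) ≤ 4^p := by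
    rw [catalan_eq_centralBinom_div]
    calc (p-1).centralBinom / (p-1+1) ≤ (p-1).centralBinom := Nat.div_le_self _ _
      _ ≤ 4^(p-1) := by
          rw [Nat.centralBinom_eq_two_mul_choose]
          calc (2*(p-1)).choose (p-1) ≤ 2^(2*(p-1)) := Nat.choose_le_two_pow _ _
            _ = 4^(p-1) := by rw [pow_mul]; norm_num
      _ ≤ 4^p := Nat.pow_le_pow_right (by norm_num) (Nat.sub_le _ _)
  have h2 : (catalan (p-1) : ℝ) ≤ 4^p := by exact_mod_cast h1
  unfold aa
  have h3 : (8*γ)^p = (2*γ)^p * 4^p := by rw [← mul_pow]; ring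
  rw [h3]
  have h4 : (0:ℝ) ≤ (2*γ)^p := by positivity
  calc 1/2 * (2*γ)^p * (catalan (p-1) : ℝ) ≤ 1 * (2*γ)^p * 4^p := by gcongr; norm_num
    _ = _ := by ring

theorem boundA (φ : Finset ℕ → ℂ) {γ : ℝ} (hγ : 0 < γ)
    (hm : ∀ S : Finset ℕ, S.Nonempty → ‖psum φ S NCr‖ ≤ γ ^ S.card) :
    ∀ n, ∀ S : Finset ℕ, S.card = n → ∀ t, 1 ≤ pc S t →
      ‖hh φ S t‖ ≤ γ ^ (qc S t) * aa γ (pc S t) := by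
  intro n
  induction n using Nat.strong_induction_on with
  | _ n IH =>
  intro S hS t
  induction t with
  | zero => 
    intro h
    obtain ⟨s, _, hs⟩ := exists_of_pc h
    omega
  | succ t iht =>
    intro h
    have hpq := pc_add_qc S (t+1)
    have hpq0 := pc_add_qc S t
    by_cases htS : t ∈ S
    · rw [pc_succ htS] at hpq ⊢
      have hq : qc S t = qc S (t+1) + 1 := by omega
      rcases Nat.eq_zero_or_pos (pc S t) with h0 | hpos
      · -- `t` is the minimum
        rw [hh_start φ (t := t+1)]
        · refine (hm S ⟨t, htS⟩).trans ?_
          rw [h0]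
          rw [h0] at hpq
          unfold aa
          rw [← hpq, pow_add]
          simp
          linarith
        · intro s hs
          by_contra hlt
          have := pc_pos (t := t) hs (by omega)
          omega
      · obtain ⟨r, hr⟩ : ∃ r, pc S t = r + 1 := ⟨pc S t - 1, by omega⟩
        have hstep := hh_step φ htS
        have heq : hh φ S (t+1) = hh φ S t - ∑ b ∈ S.filter (fun b => b ≤ t ∧ ∃ s ∈ S, s < b),
            φ (seg S b t) * hh φ (S \ seg S b t) b := by
          rw [hstep]; ring
        rw [heq]
        have hterm : ∀ b ∈ S.filter (fun b => b ≤ t ∧ ∃ s ∈ S, s < b),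
            (seg S b t).card ≤ r + 1 ∧
            ‖φ (seg S b t) * hh φ (S \ seg S b t) b‖ ≤
            γ ^ (qc S (t+1)) * (aa γ (seg S b t).card * aa γ (r+2 - (seg S b t).card)) := by
          intro b hb
          obtain ⟨hbS, hbt, s, hs, hsb⟩ := Finset.mem_filter.1 hb
          have hc := card_sdiff_seg S b t
          have hqq := qc_sdiff (S := S) hbt
          have hpp := pc_add_qc (S \ seg S b t) b
          have hbseg : b ∈ seg S b t := mem_seg.2 ⟨hbS, le_rfl, hbt⟩
          have hsnot : s ∈ S \ seg S b t := Finset.mem_sdiff.2 ⟨hs, fun h => by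
            have := (mem_seg.1 h).2.1
            omega⟩
          have hp1 := pc_pos hsnot hsb
          have hsegpos : 0 < (seg S b t).card := Finset.card_pos.2 ⟨b, hbseg⟩
          have hpe : pc (S \ seg S b t) b = r + 2 - (seg S b t).card := by omega
          refine ⟨by omega, ?_⟩
          have hlt : ∀ x ∈ seg S b t, x < t + 1 := fun x hx => by
            have := (mem_seg.1 hx).2.2
            omega
          have h1 := IH (seg S b t).card (by omega) (seg S b t) rfl (t+1) (pc_pos hbseg (by omega))
          rw [hh_end φ ⟨b, hbseg⟩ hlt] at h1
          have hp' : pc (seg S b t) (t+1) = (seg S b t).card := by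
            unfold pc
            rw [Finset.filter_true_of_mem hlt]
          have hq' : qc (seg S b t) (t+1) = 0 := by
            have := pc_add_qc (seg S b t) (t+1)
            omega
          rw [hp', hq', pow_zero, one_mul] at h1
          have h2 := IH (S \ seg S b t).card (by omega) _ rfl b hp1
          rw [hqq, hpe] at h2
          rw [norm_mul]
          calc ‖φ (seg S b t)‖ * ‖hh φ (S \ seg S b t) b‖
              ≤ aa γ (seg S b t).card * (γ ^ (qc S (t+1)) * aa γ (r+2 - (seg S b t).card)) :=
                mul_le_mul h1 h2 (norm_nonneg _) (aa_nonneg hγ _)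
            _ = _ := by ring
        have hsum : ‖∑ b ∈ S.filter (fun b => b ≤ t ∧ ∃ s ∈ S, s < b),
            φ (seg S b t) * hh φ (S \ seg S b t) b‖ ≤
            ∑ j ∈ Finset.range (r+1), 
              γ ^ (qc S (t+1)) * (aa γ (j+1) * aa γ (r+2 - (j+1))) := by
          refine (norm_sum_le _ _).trans ((Finset.sum_le_sum fun b hb => (hterm b hb).2).trans ?_)
          exact sum_seg_le (Finset.filter_subset _ _) (fun b hb => (Finset.mem_filter.1 hb).2.1)
            (fun b hb => (hterm b hb).1)
            (fun j => γ ^ (qc S (t+1)) * (aa γ j * aa γ (r+2 - j)))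
            (fun j => mul_nonneg (by positivity) (mul_nonneg (aa_nonneg hγ _) (aa_nonneg hγ _)))
        have h0 := iht (by omega)
        rw [hq, hr] at h0
        rw [hr]
        rw [← Finset.mul_sum] at hsum
        have hrec := mul_le_mul_of_nonneg_left (aa_rec hγ r) (pow_pos hγ (qc S (t+1))).le
        have hn := norm_sub_le (hh φ S t) (∑ b ∈ S.filter (fun b => b ≤ t ∧ ∃ s ∈ S, s < b),
            φ (seg S b t) * hh φ (S \ seg S b t) b)
        rw [pow_succ] at h0
        have e : r + 1 + 1 = r + 2 := rfl
        rw [e]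
        nlinarith [h0, hsum, hrec, hn]
    · rw [hh_skip φ htS, pc_skip htS]
      rw [pc_skip htS] at h hpq
      have hq : qc S (t+1) = qc S t := by omega
      rw [hq]
      exact iht h

theorem boundA' (φ : Finset ℕ → ℂ) {γ : ℝ} (hγ : 0 < γ)
    (hm : ∀ S : Finset ℕ, S.Nonempty → ‖psum φ S NCr‖ ≤ γ ^ S.card)
    (S : Finset ℕ) (hS : S.Nonempty) : ‖φ S‖ ≤ (8*γ) ^ S.card := by
  have hlt : ∀ s ∈ S, s < S.max' hS + 1 := fun s hs => Nat.lt_succ_iff.2 (Finset.le_max' _ _ hs)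
  have h := boundA φ hγ hm S.card S rfl (S.max' hS + 1)
    (pc_pos (Finset.max'_mem _ hS) (by omega))
  rw [hh_end φ hS hlt] at h
  have hp' : pc S (S.max' hS + 1) = S.card := by
    unfold pc
    rw [Finset.filter_true_of_mem hlt]
  have hq' : qc S (S.max' hS + 1) = 0 := by
    have := pc_add_qc S (S.max' hS + 1)
    omega
  rw [hp', hq', pow_zero, one_mul] at h
  exact h.trans (aa_le hγ _)

theorem hh_jump (φ : Finset ℕ → ℂ) {S : Finset ℕ} {t x : ℕ} (htx : t ≤ x)
    (h : ∀ s ∈ S, t ≤ s → x ≤ s) : hh φ S t = hh φ S x := by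
  apply psum_congr
  intro P hP
  refine and_congr_right fun _ => ?_
  constructor
  · intro h1 B hB hlt
    refine h1 B hB fun y hy => ?_
    by_contra hn
    have := h y (hP.sub B hB hy) (by omega)
    have := hlt y hy
    omega
  · intro h1 B hB hlt
    exact h1 B hB fun y hy => (hlt y hy).trans_le htx

theorem two_sum (p : ℕ) : ∑ j ∈ Finset.range p, (2:ℝ)^(p - (j+1)) = 2^p - 1 := by
  have := Finset.sum_range_reflect (fun j => (2:ℝ)^j) p
  have h2 : ∑ j ∈ Finset.range p, (2:ℝ)^(p - (j+1)) = ∑ j ∈ Finset.range p, (2:ℝ)^(p - 1 - j) := by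
    apply Finset.sum_congr rfl
    intro j _
    congr 1
    omega
  rw [h2, this, geom_sum_eq (by norm_num)]
  norm_num

theorem boundB (φ : Finset ℕ → ℂ) {γ : ℝ} (hγ : 0 < γ)
    (hφ : ∀ S : Finset ℕ, S.Nonempty → ‖φ S‖ ≤ γ ^ S.card) :
    ∀ q, ∀ S : Finset ℕ, ∀ t, qc S t = q → 1 ≤ pc S t →
      ‖hh φ S t‖ ≤ γ ^ S.card * (2 ^ (pc S t) * 4 ^ q) := by
  intro q
  induction q with
  | zero =>
    intro S t hq hp
    obtain ⟨s, hs, -⟩ := exists_of_pc hp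
    have hlt : ∀ s ∈ S, s < t := by
      intro s hs
      by_contra hn
      have : 0 < qc S t := Finset.card_pos.2 ⟨s, Finset.mem_filter.2 ⟨hs, by omega⟩⟩
      omega
    rw [hh_end φ ⟨s, hs⟩ hlt]
    refine (hφ S ⟨s, hs⟩).trans ?_
    have h1 : (1:ℝ) ≤ 2 ^ (pc S t) := one_le_pow₀ (by norm_num)
    have h2 : 0 < γ ^ S.card := by positivity
    rw [pow_zero, mul_one]
    nlinarith
  | succ q IH =>
    intro S t hq hp
    have hne : (S.filter (fun x => t ≤ x)).Nonempty := Finset.card_pos.1 (by unfold qc at hq; omega)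
    obtain ⟨x, hx⟩ : ∃ x, x = (S.filter (fun x => t ≤ x)).min' hne := ⟨_, rfl⟩
    have hxm := Finset.min'_mem _ hne
    rw [← hx] at hxm
    obtain ⟨hxS, htx⟩ := Finset.mem_filter.1 hxm
    have hj : ∀ s ∈ S, t ≤ s → x ≤ s := by
      intro s hs hts
      rw [hx]
      exact Finset.min'_le _ _ (Finset.mem_filter.2 ⟨hs, hts⟩)
    have hpx : pc S x = pc S t := by
      unfold pc
      congr 1
      ext y
      simp only [Finset.mem_filter]
      refine and_congr_right fun hy => ?_
      constructor
      · intro h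
        by_contra hn
        have := hj y hy (by omega)
        omega
      · intro h
        omega
    have h1 := pc_add_qc S t
    have h2 := pc_add_qc S x
    have h3 := pc_add_qc S (x+1)
    have h4 := pc_succ hxS
    have hqx : qc S (x+1) = q := by omega
    rw [hh_jump φ htx hj, hh_step φ hxS]
    have hmain := IH S (x+1) hqx (by omega)
    rw [h4, hpx] at hmain
    have hterm : ∀ b ∈ S.filter (fun b => b ≤ x ∧ ∃ s ∈ S, s < b),
        (seg S b x).card ≤ pc S t ∧
        ‖φ (seg S b x) * hh φ (S \ seg S b x) b‖ ≤
        γ ^ S.card * (2 ^ (pc S t + 1 - (seg S b x).card) * 4 ^ q) := by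
      intro b hb
      obtain ⟨hbS, hbt, s, hs, hsb⟩ := Finset.mem_filter.1 hb
      have hc := card_sdiff_seg S b x
      have hqq := qc_sdiff (S := S) hbt
      have hpp := pc_add_qc (S \ seg S b x) b
      have hbseg : b ∈ seg S b x := mem_seg.2 ⟨hbS, le_rfl, hbt⟩
      have hsnot : s ∈ S \ seg S b x := Finset.mem_sdiff.2 ⟨hs, fun h => by
        have := (mem_seg.1 h).2.1
        omega⟩
      have hp1 := pc_pos hsnot hsb
      have hpe : pc (S \ seg S b x) b = pc S t + 1 - (seg S b x).card := by omega
      refine ⟨by omega, ?_⟩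
      have e1 := hφ (seg S b x) ⟨b, hbseg⟩
      have e2 := IH (S \ seg S b x) b (by omega) hp1
      rw [hpe] at e2
      rw [norm_mul, ← hc]
      calc ‖φ (seg S b x)‖ * ‖hh φ (S \ seg S b x) b‖
          ≤ γ ^ (seg S b x).card * (γ ^ (S \ seg S b x).card *
              (2 ^ (pc S t + 1 - (seg S b x).card) * 4 ^ q)) :=
            mul_le_mul e1 e2 (norm_nonneg _) (by positivity)
        _ = _ := by rw [pow_add]; ring
    have hsum : ‖∑ b ∈ S.filter (fun b => b ≤ x ∧ ∃ s ∈ S, s < b),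
        φ (seg S b x) * hh φ (S \ seg S b x) b‖ ≤
        ∑ j ∈ Finset.range (pc S t), 
          γ ^ S.card * ((2:ℝ) ^ (pc S t + 1 - (j+1)) * 4 ^ q) := by
      refine (norm_sum_le _ _).trans ((Finset.sum_le_sum fun b hb => (hterm b hb).2).trans ?_)
      exact sum_seg_le (Finset.filter_subset _ _) (fun b hb => (Finset.mem_filter.1 hb).2.1)
        (fun b hb => (hterm b hb).1)
        (fun j => γ ^ S.card * ((2:ℝ) ^ (pc S t + 1 - j) * 4 ^ q))
        (fun j => by positivity)
    have hsum2 : ∑ j ∈ Finset.range (pc S t), 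
          γ ^ S.card * ((2:ℝ) ^ (pc S t + 1 - (j+1)) * 4 ^ q) = 
          γ ^ S.card * 4 ^ q * (2 * (2 ^ (pc S t) - 1)) := by
      rw [← two_sum, Finset.mul_sum, Finset.mul_sum]
      apply Finset.sum_congr rfl
      intro j hj
      have := Finset.mem_range.1 hj
      have e : pc S t + 1 - (j+1) = (pc S t - (j+1)) + 1 := by omega
      rw [e, pow_succ]
      ring
    rw [hsum2] at hsum
    refine (norm_add_le _ _).trans ((add_le_add hmain hsum).trans ?_)
    have : 0 < γ ^ S.card * 4 ^ q := by positivity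
    rw [pow_succ, pow_succ]
    nlinarith

theorem boundB' (φ : Finset ℕ → ℂ) {γ : ℝ} (hγ : 0 < γ)
    (hφ : ∀ S : Finset ℕ, S.Nonempty → ‖φ S‖ ≤ γ ^ S.card)
    (S : Finset ℕ) (hS : S.Nonempty) : ‖psum φ S NCr‖ ≤ (4*γ) ^ S.card := by
  rw [← hh_start φ (t := S.min' hS + 1) (fun s hs => Nat.succ_le_succ (Finset.min'_le _ _ hs))]
  have h := boundB φ hγ hφ _ S (S.min' hS + 1) rfl (pc_pos (Finset.min'_mem _ hS) (by omega))
  refine h.trans ?_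
  rw [mul_pow, mul_comm]
  apply mul_le_mul_of_nonneg_right _ (by positivity)
  rw [← pc_add_qc S (S.min' hS + 1), pow_add]
  gcongr
  norm_num

theorem seg_max {S : Finset ℕ} {b : ℕ} (hS : S.Nonempty) (hb : ∀ s ∈ S, b ≤ s) :
    seg S b (S.max' hS) = S := by
  unfold seg
  exact Finset.filter_true_of_mem fun s hs => ⟨hb s hs, Finset.le_max' _ _ hs⟩

theorem boundC (φ : Finset ℕ → ℂ) {γ : ℝ} (hγ : 0 < γ)
    (hφ : ∀ S : Finset ℕ, S.Nonempty → ‖φ S‖ ≤ γ ^ S.card) :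
    ∀ n, ∀ S : Finset ℕ, S.card = n → ‖psum φ S (AllCvx S)‖ ≤ γ ^ n * 2 ^ n := by
  intro n
  induction n using Nat.strong_induction_on with
  | _ n IH =>
  intro S hS
  rcases S.eq_empty_or_nonempty with rfl | hne
  · rw [int_empty]
    simp at hS
    simp [← hS]
  · have hmax := fun s (hs : s ∈ S) => Finset.le_max' S s hs
    rw [int_step φ (Finset.max'_mem S hne) hmax]
    have hterm : ∀ b ∈ S, ‖φ (seg S b (S.max' hne)) * psum φ (S \ seg S b (S.max' hne))
        (AllCvx (S \ seg S b (S.max' hne)))‖ ≤ γ ^ n * 2 ^ (n - (seg S b (S.max' hne)).card) := by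
      intro b hb
      have hbseg : b ∈ seg S b (S.max' hne) := mem_seg.2 ⟨hb, le_rfl, hmax b hb⟩
      have hc := card_sdiff_seg S b (S.max' hne)
      have hpos : 0 < (seg S b (S.max' hne)).card := Finset.card_pos.2 ⟨b, hbseg⟩
      have e1 := hφ _ ⟨b, hbseg⟩
      have e2 := IH _ (by omega) _ (rfl : (S \ seg S b (S.max' hne)).card = _)
      have e3 : (S \ seg S b (S.max' hne)).card = n - (seg S b (S.max' hne)).card := by omega
      rw [norm_mul]
      refine (mul_le_mul e1 e2 (norm_nonneg _) (by positivity)).trans (le_of_eq ?_)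
      rw [← mul_assoc, ← pow_add, e3]
      congr 2
      omega
    refine (norm_sum_le _ _).trans ((Finset.sum_le_sum hterm).trans ?_)
    refine (sum_seg_le (N := n) (Finset.Subset.refl S) hmax
      (fun b hb => by have := card_sdiff_seg S b (S.max' hne); omega)
      (fun j => γ ^ n * 2 ^ (n - j)) (fun j => by positivity)).trans ?_
    rw [← Finset.mul_sum, two_sum]
    have : 0 < γ ^ n := by positivity
    nlinarith

theorem boundD (φ : Finset ℕ → ℂ) {γ : ℝ} (hγ : 0 < γ)
    (hm : ∀ S : Finset ℕ, S.Nonempty → ‖psum φ S (AllCvx S)‖ ≤ γ ^ S.card) :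
    ∀ n, ∀ S : Finset ℕ, S.card = n → S.Nonempty → ‖φ S‖ ≤ γ ^ n * 2 ^ n := by
  intro n
  induction n using Nat.strong_induction_on with
  | _ n IH =>
  intro S hS hne
  have hm' : ∀ S : Finset ℕ, ‖psum φ S (AllCvx S)‖ ≤ γ ^ S.card := by
    intro S
    rcases S.eq_empty_or_nonempty with rfl | hne
    · rw [int_empty]
      simp
    · exact hm S hne
  have hmax := fun s (hs : s ∈ S) => Finset.le_max' S s hs
  have hmin := fun s (hs : s ∈ S) => Finset.min'_le S s hs
  have hstep := int_step φ (Finset.max'_mem S hne) hmax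
  rw [← Finset.add_sum_erase S _ (Finset.min'_mem S hne), seg_max hne hmin, Finset.sdiff_self,
    int_empty, mul_one] at hstep
  have hterm : ∀ b ∈ S.erase (S.min' hne), (seg S b (S.max' hne)).card ≤ n - 1 ∧
      ‖φ (seg S b (S.max' hne)) * psum φ (S \ seg S b (S.max' hne))
        (AllCvx (S \ seg S b (S.max' hne)))‖ ≤ γ ^ n * 2 ^ ((seg S b (S.max' hne)).card) := by
    intro b hb'
    have hb := Finset.mem_of_mem_erase hb'
    have hbseg : b ∈ seg S b (S.max' hne) := mem_seg.2 ⟨hb, le_rfl, hmax b hb⟩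
    have hc := card_sdiff_seg S b (S.max' hne)
    have hmn : S.min' hne ∈ S \ seg S b (S.max' hne) := by
      refine Finset.mem_sdiff.2 ⟨Finset.min'_mem _ _, fun h => ?_⟩
      have h1 := (mem_seg.1 h).2.1
      exact Finset.ne_of_mem_erase hb' (le_antisymm h1 (hmin b hb))
    have hpos : 0 < (S \ seg S b (S.max' hne)).card := Finset.card_pos.2 ⟨_, hmn⟩
    refine ⟨by omega, ?_⟩
    have e1 := IH _ (by omega) _ (rfl : (seg S b (S.max' hne)).card = _) ⟨b, hbseg⟩
    have e2 := hm' (S \ seg S b (S.max' hne))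
    rw [norm_mul]
    refine (mul_le_mul e1 e2 (norm_nonneg _) (by positivity)).trans (le_of_eq ?_)
    rw [← hS, ← hc, pow_add]
    ring
  have hsum : ‖∑ b ∈ S.erase (S.min' hne), φ (seg S b (S.max' hne)) *
      psum φ (S \ seg S b (S.max' hne)) (AllCvx (S \ seg S b (S.max' hne)))‖ ≤
      γ ^ n * (2 ^ n - 2) := by
    refine (norm_sum_le _ _).trans ((Finset.sum_le_sum fun b hb => (hterm b hb).2).trans ?_)
    refine (sum_seg_le (Finset.erase_subset _ _) (fun b hb => hmax b (Finset.mem_of_mem_erase hb))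
      (fun b hb => (hterm b hb).1)
      (fun j => γ ^ n * 2 ^ j) (fun j => by positivity)).trans ?_
    rw [← Finset.mul_sum]
    have hn : 0 < n := by rw [← hS]; exact Finset.card_pos.2 hne
    obtain ⟨r, rfl⟩ : ∃ r, n = r + 1 := ⟨n - 1, by omega⟩
    apply le_of_eq
    congr 1
    simp only [Nat.add_sub_cancel, pow_succ]
    rw [← Finset.sum_mul, geom_sum_eq (by norm_num)]
    ring
  have heq : φ S = psum φ S (AllCvx S) - ∑ b ∈ S.erase (S.min' hne), φ (seg S b (S.max' hne)) *
      psum φ (S \ seg S b (S.max' hne)) (AllCvx (S \ seg S b (S.max' hne))) := by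
    rw [hstep]; ring
  rw [heq]
  have h0 := hm S hne
  rw [hS] at h0
  have : 0 < γ ^ n := by positivity
  refine (norm_sub_le _ _).trans ((add_le_add h0 hsum).trans ?_)
  nlinarith

/-! ### Transfer to words -/

/-- Coefficient of `f` for the restriction of the infinite word `w` to `B`. -/
noncomputable def phi {k : ℕ} (f : NCSeries k) (w : ℕ → Fin k) (B : Finset ℕ) : ℂ :=
  if h : B.Nonempty then
    f (B.card - 1) (fun j =>
      w (B.orderEmbOfFin (Nat.succ_pred_eq_of_pos (Finset.card_pos.mpr h)).symm j))
  else 1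

theorem phi_eq {k : ℕ} (f : NCSeries k) (w : ℕ → Fin k) {B : Finset ℕ} {n : ℕ}
    (hc : B.card = n + 1) (u : Fin (n+1) → ℕ) (hu : StrictMono u) (huB : ∀ i, u i ∈ B) :
    phi f w B = f n (fun j => w (u j)) := by
  have hne : B.Nonempty := Finset.card_pos.1 (by omega)
  obtain rfl : n = B.card - 1 := by omega
  unfold phi
  rw [dif_pos hne]
  congr 1
  funext j
  rw [Finset.orderEmbOfFin_unique (Nat.succ_pred_eq_of_pos (Finset.card_pos.mpr hne)).symm huB hu]

theorem partCoeff_eq_s11 {k m : ℕ} (f : NCSeries k) (v : Fin (m+1) → Fin k) {B : Finset (Fin (m+1))}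
    {n : ℕ} (hc : B.card = n + 1) (u : Fin (n+1) → Fin (m+1)) (hu : StrictMono u)
    (huB : ∀ i, u i ∈ B) :
    partCoeff f v B = f n (fun j => v (u j)) := by
  have hne : B.Nonempty := Finset.card_pos.1 (by omega)
  obtain rfl : n = B.card - 1 := by omega
  unfold partCoeff
  rw [dif_pos hne]
  congr 1
  funext j
  rw [Finset.orderEmbOfFin_unique (Nat.succ_pred_eq_of_pos (Finset.card_pos.mpr hne)).symm huB hu]
  rfl

theorem partCoeff_phi {k m : ℕ} (f : NCSeries k) (w : ℕ → Fin k) (e : Fin (m+1) ↪o ℕ)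
    (B : Finset (Fin (m+1))) :
    partCoeff f (fun j => w (e j)) B = phi f w (B.map e.toEmbedding) := by
  rcases B.eq_empty_or_nonempty with rfl | hne
  · simp [partCoeff, phi]
  · obtain ⟨n, hn⟩ : ∃ n, B.card = n + 1 :=
      ⟨B.card - 1, (Nat.succ_pred_eq_of_pos (Finset.card_pos.mpr hne)).symm⟩
    rw [partCoeff_eq_s11 f _ hn (B.orderEmbOfFin hn) (B.orderEmbOfFin hn).strictMono
      (fun i => Finset.orderEmbOfFin_mem B hn i)]
    rw [phi_eq f w (n := n) (by rw [Finset.card_map, hn]) (fun j => e (B.orderEmbOfFin hn j))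
      (e.strictMono.comp (B.orderEmbOfFin hn).strictMono)
      (fun i => Finset.mem_map.2 ⟨_, Finset.orderEmbOfFin_mem B hn i, rfl⟩)]

/-- The image of a partition. -/
noncomputable def img {m : ℕ} (e : Fin m ↪o ℕ) (π : FP m) : Finset (Finset ℕ) :=
  π.parts.map ⟨fun B => B.map e.toEmbedding, Finset.map_injective _⟩

theorem mem_img {m : ℕ} {e : Fin m ↪o ℕ} {π : FP m} {C : Finset ℕ} :
    C ∈ img e π ↔ ∃ B ∈ π.parts, B.map e.toEmbedding = C := by
  unfold img
  rw [Finset.mem_map]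
  rfl

theorem mem_map_e {m : ℕ} {e : Fin m ↪o ℕ} {B : Finset (Fin m)} {i : Fin m} :
    e i ∈ B.map e.toEmbedding ↔ i ∈ B := Finset.mem_map' e.toEmbedding

theorem fp_dis {m : ℕ} (π : FP m) {B C : Finset (Fin m)} (hB : B ∈ π.parts) (hC : C ∈ π.parts)
    {x : Fin m} (hxB : x ∈ B) (hxC : x ∈ C) : B = C :=
  π.eq_of_mem_parts hB hC hxB hxC

theorem transfer {k m : ℕ} (f : NCSeries k) (w : ℕ → Fin k) (e : Fin (m+1) ↪o ℕ) (S : Finset ℕ)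
    (he : ∀ x, x ∈ S ↔ ∃ i, e i = x)
    (Q : FP (m+1) → Prop) (Q' : Finset (Finset ℕ) → Prop) (hQ : ∀ π, Q π ↔ Q' (img e π)) :
    (∑ π : FP (m+1), if Q π then genCoeff f (fun j => w (e j)) π else 0) = psum (phi f w) S Q' := by
  rw [← Finset.sum_filter]
  unfold psum
  refine Finset.sum_bij (fun π _ => img e π) ?_ ?_ ?_ ?_
  · intro π hπ
    rw [Finset.mem_filter] at hπ
    refine mem_PQ.2 ⟨?_, (hQ π).1 hπ.2⟩
    constructor
    · intro C hC
      obtain ⟨B, hB, rfl⟩ := mem_img.1 hC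
      exact (π.nonempty_of_mem_parts hB).map
    · intro C hC x hx
      obtain ⟨B, hB, rfl⟩ := mem_img.1 hC
      obtain ⟨i, hi, rfl⟩ := Finset.mem_map.1 hx
      exact (he _).2 ⟨i, rfl⟩
    · intro x hx
      obtain ⟨i, rfl⟩ := (he x).1 hx
      obtain ⟨B, hB, hi⟩ := π.exists_mem (Finset.mem_univ i)
      exact ⟨_, mem_img.2 ⟨B, hB, rfl⟩, mem_map_e.2 hi⟩
    · intro C hC D hD x hxC hxD
      obtain ⟨B, hB, rfl⟩ := mem_img.1 hC
      obtain ⟨B', hB', rfl⟩ := mem_img.1 hD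
      obtain ⟨i, hi, rfl⟩ := Finset.mem_map.1 hxC
      rw [fp_dis π hB hB' hi (mem_map_e.1 hxD)]
  · intro π _ ρ _ h
    exact Finpartition.ext (Finset.map_injective _ h)
  · intro P hP
    obtain ⟨hP, hQP⟩ := mem_PQ.1 hP
    have hpre : ∀ C ∈ P, ∃ B : Finset (Fin (m+1)), B.map e.toEmbedding = C := by
      intro C hC
      refine ⟨Finset.univ.filter (fun i => e i ∈ C), ?_⟩
      ext x
      rw [Finset.mem_map]
      constructor
      · rintro ⟨i, hi, rfl⟩
        exact (Finset.mem_filter.1 hi).2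
      · intro hx
        obtain ⟨i, rfl⟩ := (he x).1 (hP.sub C hC hx)
        exact ⟨i, Finset.mem_filter.2 ⟨Finset.mem_univ _, hx⟩, rfl⟩
    obtain ⟨π, hπ⟩ : ∃ π : FP (m+1), ∀ B, B ∈ π.parts ↔ B.map e.toEmbedding ∈ P := by
      refine ⟨Finpartition.ofExistsUnique
        (Finset.univ.filter (fun B : Finset (Fin (m+1)) => B.map e.toEmbedding ∈ P))
        (fun _ _ => Finset.subset_univ _) ?_ ?_, ?_⟩
      · intro i _
        obtain ⟨C, hC, hi⟩ := hP.cov (e i) ((he _).2 ⟨i, rfl⟩)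
        obtain ⟨B, rfl⟩ := hpre C hC
        refine ⟨B, ⟨Finset.mem_filter.2 ⟨Finset.mem_univ _, hC⟩, mem_map_e.1 hi⟩, ?_⟩
        rintro B' ⟨hB', hi'⟩
        exact Finset.map_injective _
          (hP.dis _ (Finset.mem_filter.1 hB').2 _ hC (e i) (mem_map_e.2 hi') hi)
      · intro h
        have := hP.ne _ (Finset.mem_filter.1 h).2
        simp at this
      · intro B
        simp [Finpartition.ofExistsUnique]
    have himg : img e π = P := by
      ext C
      rw [mem_img]
      constructor
      · rintro ⟨B, hB, rfl⟩
        exact (hπ B).1 hB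
      · intro hC
        obtain ⟨B, rfl⟩ := hpre C hC
        exact ⟨B, (hπ B).2 hC, rfl⟩
    refine ⟨π, Finset.mem_filter.2 ⟨Finset.mem_univ _, ?_⟩, himg⟩
    rw [hQ, himg]
    exact hQP
  · intro π _
    unfold genCoeff wt img
    rw [Finset.prod_map]
    apply Finset.prod_congr rfl
    intro B _
    exact partCoeff_phi f w e B

theorem isNC_iff {m : ℕ} (e : Fin m ↪o ℕ) (π : FP m) : IsNC π ↔ NCr (img e π) := by
  constructor
  · intro h B hB C hC i hi j hj k hk l hl hij hjk hkl
    obtain ⟨B, hB', rfl⟩ := mem_img.1 hB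
    obtain ⟨C, hC', rfl⟩ := mem_img.1 hC
    obtain ⟨i, hi', rfl⟩ := Finset.mem_map.1 hi
    obtain ⟨j, hj', rfl⟩ := Finset.mem_map.1 hj
    obtain ⟨k, hk', rfl⟩ := Finset.mem_map.1 hk
    obtain ⟨l, hl', rfl⟩ := Finset.mem_map.1 hl
    obtain ⟨D, hD, hiD, hjD⟩ := h i j k l (e.lt_iff_lt.1 hij) (e.lt_iff_lt.1 hjk)
      (e.lt_iff_lt.1 hkl) ⟨B, hB', hi', hk'⟩ ⟨C, hC', hj', hl'⟩
    rw [fp_dis π hB' hD hi' hiD, fp_dis π hC' hD hj' hjD]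
  · rintro h i j k l hij hjk hkl ⟨B, hB, hi, hk⟩ ⟨C, hC, hj, hl⟩
    have := h _ (mem_img.2 ⟨B, hB, rfl⟩) _ (mem_img.2 ⟨C, hC, rfl⟩) (e i) (mem_map_e.2 hi) (e j)
      (mem_map_e.2 hj) (e k) (mem_map_e.2 hk) (e l) (mem_map_e.2 hl) (e.lt_iff_lt.2 hij)
      (e.lt_iff_lt.2 hjk) (e.lt_iff_lt.2 hkl)
    have := Finset.map_injective _ this
    subst this
    exact ⟨B, hB, hi, hj⟩

theorem isInt_iff {m : ℕ} (e : Fin m ↪o ℕ) (S : Finset ℕ) (he : ∀ x, x ∈ S ↔ ∃ i, e i = x)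
    (π : FP m) : IsIntervalPartition π ↔ AllCvx S (img e π) := by
  constructor
  · intro h B hB x hx z hz y hy hxy hyz
    obtain ⟨B, hB', rfl⟩ := mem_img.1 hB
    obtain ⟨x, hx', rfl⟩ := Finset.mem_map.1 hx
    obtain ⟨z, hz', rfl⟩ := Finset.mem_map.1 hz
    obtain ⟨y, rfl⟩ := (he y).1 hy
    exact mem_map_e.2 (h B hB' x hx' z hz' y (e.le_iff_le.1 hxy) (e.le_iff_le.1 hyz))
  · intro h B hB x hx z hz y hxy hyz
    exact mem_map_e.1 (h _ (mem_img.2 ⟨B, hB, rfl⟩) (e x) (mem_map_e.2 hx) (e z) (mem_map_e.2 hz)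
      (e y) ((he _).2 ⟨y, rfl⟩) (e.le_iff_le.2 hxy) (e.le_iff_le.2 hyz))

theorem exists_emb {S : Finset ℕ} (hS : S.Nonempty) : ∃ n, S.card = n + 1 ∧
    ∃ e : Fin (n+1) ↪o ℕ, ∀ x, x ∈ S ↔ ∃ i, e i = x := by
  have hc : S.card = (S.card - 1) + 1 := (Nat.succ_pred_eq_of_pos (Finset.card_pos.mpr hS)).symm
  refine ⟨S.card - 1, hc, S.orderEmbOfFin hc, fun x => ?_⟩
  have := Finset.range_orderEmbOfFin S hc
  rw [← Finset.mem_coe, ← this, Set.mem_range]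

theorem phi_emb {k : ℕ} (f : NCSeries k) (w : ℕ → Fin k) {S : Finset ℕ} {n : ℕ}
    (hc : S.card = n + 1) (e : Fin (n+1) ↪o ℕ) (he : ∀ x, x ∈ S ↔ ∃ i, e i = x) :
    phi f w S = f n (fun j => w (e j)) :=
  phi_eq f w hc e e.strictMono (fun i => (he _).2 ⟨i, rfl⟩)

theorem nc_sum {k : ℕ} {μ : Dist k} {f : NCSeries k} (hf : IsRTransform μ f) (w : ℕ → Fin k)
    {S : Finset ℕ} (hS : S.Nonempty) :
    psum (phi f w) S NCr = phi (momentSeries μ) w S := by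
  obtain ⟨n, hc, e, he⟩ := exists_emb hS
  rw [phi_emb _ w hc e he, hf, transfer f w e S he IsNC NCr (isNC_iff e)]

theorem int_sum {k : ℕ} {μ : Dist k} {f : NCSeries k} (hf : IsEtaSeries μ f) (w : ℕ → Fin k)
    {S : Finset ℕ} (hS : S.Nonempty) :
    psum (phi f w) S (AllCvx S) = phi (momentSeries μ) w S := by
  obtain ⟨n, hc, e, he⟩ := exists_emb hS
  rw [phi_emb _ w hc e he, hf,
    transfer f w e S he IsIntervalPartition (AllCvx S) (isInt_iff e S he)]

/-- Exponential bounds in terms of `phi`. -/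
theorem bound_phi {k : ℕ} (f : NCSeries k) (γ : ℝ) :
    (∀ (n : ℕ) (w : Fin (n+1) → Fin k), ‖f n w‖ ≤ γ ^ (n+1)) ↔
      ∀ (w : ℕ → Fin k) (S : Finset ℕ), S.Nonempty → ‖phi f w S‖ ≤ γ ^ S.card := by
  constructor
  · intro h w S hS
    obtain ⟨n, hc, e, he⟩ := exists_emb hS
    rw [phi_emb _ w hc e he, hc]
    exact h _ _
  · intro h n w
    have h1 := h (fun i => if hi : i < n + 1 then w ⟨i, hi⟩ else w 0) (Finset.range (n+1))
      ⟨0, by simp⟩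
    rw [phi_eq f _ (n := n) (by simp) (fun i => (i : ℕ)) (fun i j hij => hij)
      (fun i => Finset.mem_range.2 i.2), Finset.card_range] at h1
    have e1 : (fun j : Fin (n+1) => if hi : (j : ℕ) < n + 1 then w ⟨j, hi⟩ else w 0) = w := by
      funext j
      rw [dif_pos j.2]
    rwa [e1] at h1

/-- Lemma 5.6: for `μ ∈ D_alg(k)`, the exponential bounds
`|Cf_w(M_μ)| ≤ γ^n`, `|Cf_w(R_μ)| ≤ γ^n`, `|Cf_w(η_μ)| ≤ γ^n` (each for some `γ > 0`)
are equivalent. -/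
theorem statement11 (k : ℕ) (hk : 0 < k) (μ : Dist k) (hμ : IsDalg μ)
    (f g : NCSeries k) (hf : IsRTransform μ f) (hg : IsEtaSeries μ g) :
    ((∃ γ : ℝ, 0 < γ ∧ ∀ (n : ℕ) (w : Fin (n+1) → Fin k),
        ‖momentSeries μ n w‖ ≤ γ ^ (n+1)) ↔
      (∃ γ : ℝ, 0 < γ ∧ ∀ (n : ℕ) (w : Fin (n+1) → Fin k), ‖f n w‖ ≤ γ ^ (n+1))) ∧
    ((∃ γ : ℝ, 0 < γ ∧ ∀ (n : ℕ) (w : Fin (n+1) → Fin k),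
        ‖momentSeries μ n w‖ ≤ γ ^ (n+1)) ↔
      (∃ γ : ℝ, 0 < γ ∧ ∀ (n : ℕ) (w : Fin (n+1) → Fin k), ‖g n w‖ ≤ γ ^ (n+1))) := by
  simp only [bound_phi]
  refine ⟨⟨?_, ?_⟩, ⟨?_, ?_⟩⟩
  · rintro ⟨γ, hγ, h⟩
    refine ⟨8*γ, by positivity, fun w S hS => ?_⟩
    exact boundA' (phi f w) hγ (fun T hT => by rw [nc_sum hf w hT]; exact h w T hT) S hS
  · rintro ⟨γ, hγ, h⟩
    refine ⟨4*γ, by positivity, fun w S hS => ?_⟩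
    rw [← nc_sum hf w hS]
    exact boundB' (phi f w) hγ (h w) S hS
  · rintro ⟨γ, hγ, h⟩
    refine ⟨γ*2, by positivity, fun w S hS => ?_⟩
    rw [mul_pow]
    exact boundD (phi g w) hγ (fun T hT => by rw [int_sum hg w hT]; exact h w T hT) _ S rfl hS
  · rintro ⟨γ, hγ, h⟩
    refine ⟨γ*2, by positivity, fun w S hS => ?_⟩
    rw [← int_sum hg w hS, mul_pow]
    exact boundC (phi g w) hγ (h w) _ S rfl
end BBP
end
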